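/- arXiv:math/0310060 — 7 statements merged into one kernel-verified Lean document; each statement's English description precedes it below -/
import Mathlib

section
/- Let K be a field of characteristic 0 and let p, q ∈ K[x, y] be polynomials in two variables. If p and q are stably equivalent, i.e., there exist an integer m > 2 and a K-algebra automorphism φ of the polynomial ring K[x₁, …, xₘ] such that φ maps the image of p under the natural inclusion K[x, y] → K[x₁, …, xₘ] (x ↦ x₁, y ↦ x₂) to the image of q, then p and q are equivalent, i.e., there exists a K-algebra automorphism α of K[x, y] with α(p) = q. -/
open MvPolynomial

/-!
Let `φ` be an isomorphism of the big polynomial rings with `φ p = q`, where `p` and `q` are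
nonconstant. If `φ` maps `K[x, y]` into itself, then it restricts to an automorphism, because a
surjective endomorphism of a polynomial ring is bijective. Otherwise some partial derivative `∂ⱼ`
in an extra variable is nonzero on `φ(K[x, y])` and kills `φ p = q`. Since relatively prime
polynomials stay relatively prime in the big ring, `∂ⱼ ∘ φ = k · (φ ∘ D)`, where `D` is the
Jacobian derivation of `p` divided by the gcd of the partial derivatives of `p`. So `D` inherits
local nilpotency from `∂ⱼ`, and by Rentschler's theorem `ker D = K[v]` for a coordinate `v`, whence
`p = f(v)`. In the same way `q = g(w)` for a coordinate `w`, unless `φ⁻¹` restricts. As `K[x, y]` is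
algebraically closed in the big ring, `a = φ v` and `b = φ⁻¹ w` lie in `K[x, y]`. Then `b ∈ ker D`,
say `b = r(v)`, and `w = r(a)` forces `a` to be a coordinate; the automorphism `v ↦ a` maps
`p = f(v)` to `f(a) = q`.

For Rentschler's theorem, `v` is a nonconstant element of `ker D` of least degree, so that each
`v - λ` is prime, and `g` is a polynomial of least degree with `g(v) = D s` for some `s`. If
`g(λ) = 0`, then either `s` is constant on the curve `v = λ`, and `s` can be corrected to lower the
degree of `g`, or `v - λ` divides every value of `D` and can be cancelled. Over an algebraically
closed field this shows that `g(v)` divides every value of `D`, a fact that descends to `K`; hence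
`D = g(v) · E` where `E` has the slice `s`, and `K[x, y] = K[v, s]`.
-/

namespace StableEquivalence

section Derivation

open Finset.HasAntidiagonal

variable {R A : Type*} [CommRing R] [CommRing A] [Algebra R A] {D : Derivation R A A}

/-- The ring of constants of a derivation `D`, i.e. the set of zeros of `D` as a subalgebra. -/
def kernel (D : Derivation R A A) : Subalgebra R A where
  carrier := {a | D a = 0}
  mul_mem' {a b} ha hb := by
    change D (a * b) = 0
    rw [D.leibniz, show D a = 0 from ha, show D b = 0 from hb, smul_zero, smul_zero, add_zero]
  add_mem' {a b} ha hb := by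
    change D (a + b) = 0
    rw [map_add, show D a = 0 from ha, show D b = 0 from hb, add_zero]
  algebraMap_mem' := D.map_algebraMap

@[simp]
theorem mem_kernel {a : A} : a ∈ kernel D ↔ D a = 0 :=
  Iff.rfl

theorem map_mul_of_mem_kernel {c : A} (hc : D c = 0) (a : A) : D (c * a) = c * D a := by
  rw [D.leibniz, hc, smul_zero, add_zero, smul_eq_mul]

theorem map_aeval_of_le_kernel {S : Subalgebra R A} (hS : S ≤ kernel D) (F : Polynomial S)
    (a : A) : D (Polynomial.aeval a F) = Polynomial.aeval a F.derivative * D a := by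
  induction F using Polynomial.induction_on' with
  | add F G hF hG => simp only [map_add, hF, hG, add_mul]
  | monomial n c =>
    have hc : D (algebraMap S A c) = 0 := hS c.2
    rw [Polynomial.aeval_monomial, map_mul_of_mem_kernel hc, D.leibniz_pow,
      Polynomial.derivative_monomial, Polynomial.aeval_monomial]
    simp only [map_mul, map_natCast, smul_eq_mul, nsmul_eq_mul]
    ring

theorem mem_kernel_of_isAlgebraic [IsDomain A] [CharZero A] {S : Subalgebra R A}
    (hS : S ≤ kernel D) {a : A} (ha : IsAlgebraic S a) : D a = 0 := by
  by_contra hDa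
  obtain ⟨F, hF, hFa⟩ := ha
  induction hn : F.natDegree using Nat.strong_induction_on generalizing F with
  | _ n ih =>
    subst hn
    by_cases hdeg : F.natDegree = 0
    · rw [Polynomial.eq_C_of_natDegree_eq_zero hdeg] at hF hFa
      simp only [Polynomial.aeval_C, FaithfulSMul.algebraMap_eq_zero_iff] at hFa
      exact hF (by rw [hFa, map_zero])
    · have hroot : Polynomial.aeval a F.derivative = 0 := by
        have hD := map_aeval_of_le_kernel hS F a
        rw [hFa, map_zero] at hD
        exact (mul_eq_zero.mp hD.symm).resolve_right hDa
      exact ih _ (Polynomial.natDegree_derivative_lt hdeg) F.derivative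
        (fun h => hdeg (Polynomial.derivative_eq_zero.mp h)) hroot rfl

theorem mem_kernel_of_aeval_mem_kernel [IsDomain A] [CharZero A] {K : Type*} [Field K]
    [Algebra K A] {D : Derivation K A A} {f : Polynomial K} (hf : f.natDegree ≠ 0) {b : A}
    (hfb : D (Polynomial.aeval b f) = 0) : D b = 0 := by
  refine mem_kernel_of_isAlgebraic le_rfl (S := kernel D) ?_
  refine IsAlgebraic.of_aeval (f.map (algebraMap K (kernel D))) ?_ ?_ ?_
  · rwa [Polynomial.natDegree_map]
  · refine mem_nonZeroDivisors_of_ne_zero (Polynomial.leadingCoeff_ne_zero.mpr ?_)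
    exact Polynomial.map_ne_zero (Polynomial.ne_zero_of_natDegree_gt (Nat.pos_of_ne_zero hf))
  · rw [Polynomial.aeval_map_algebraMap]
    exact isAlgebraic_algebraMap (⟨_, hfb⟩ : kernel D)

theorem eq_zero_of_algebraicIndependent_of_trdeg_le [Nontrivial R] [IsDomain A] [CharZero A]
    {ι : Type*} [Finite ι] {x : ι → A} (hx : AlgebraicIndependent R x)
    (htr : Algebra.trdeg R A ≤ Nat.card ι) (hD : ∀ i, D (x i) = 0) : D = 0 := by
  have hbasis := hx.isTranscendenceBasis_of_lift_trdeg_le_of_finite <| by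
    rwa [← Nat.cast_card (α := ι), Cardinal.lift_natCast, Cardinal.lift_le_nat_iff]
  have hle : Algebra.adjoin R (Set.range x) ≤ kernel D :=
    Algebra.adjoin_le (Set.range_subset_iff.mpr hD)
  exact Derivation.ext fun a => mem_kernel_of_isAlgebraic hle (hbasis.isAlgebraic.isAlgebraic a)

theorem exists_eq_smul_of_forall_dvd [IsDomain A] {π : A} (hπ : π ≠ 0) (h : ∀ a, π ∣ D a) :
    ∃ D' : Derivation R A A, D = π • D' := by
  choose d hd using h
  refine ⟨Derivation.mk' ⟨⟨d, fun a b => ?_⟩, fun r a => ?_⟩ fun a b => ?_, Derivation.ext hd⟩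
  all_goals refine mul_left_cancel₀ hπ ?_
  · rw [mul_add, ← hd, ← hd, ← hd, map_add]
  · rw [RingHom.id_apply, mul_smul_comm, ← hd, ← hd, D.map_smul]
  · change π * d (a * b) = π * (a • d b + b • d a)
    rw [mul_add, mul_smul_comm, mul_smul_comm, ← hd, ← hd, ← hd, D.leibniz]

theorem kernel_smul [IsDomain A] (D : Derivation R A A) {c : A} (hc : c ≠ 0) :
    kernel (c • D) = kernel D := by
  ext a
  simp only [mem_kernel, Derivation.smul_apply, smul_eq_mul, mul_eq_zero, hc, false_or]

theorem iterate_mul (D : Derivation R A A) (n : ℕ) (a b : A) :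
    D^[n] (a * b) = ∑ ij ∈ antidiagonal n, n.choose ij.1 • (D^[ij.1] a * D^[ij.2] b) := by
  induction n with
  | zero => simp
  | succ n ih =>
    rw [Finset.sum_antidiagonal_choose_succ_nsmul (fun i j => D^[i] a * D^[j] b) n]
    simp only [Function.iterate_succ_apply', ih, map_sum, map_nsmul, D.leibniz, smul_add,
      Finset.sum_add_distrib, smul_eq_mul, add_right_inj]
    refine Finset.sum_congr rfl fun ij hij => ?_
    rw [n.choose_symm_of_eq_add (mem_antidiagonal.1 hij).symm, mul_comm]

theorem iterate_eq_zero_of_le {a : A} {m n : ℕ} (hmn : m ≤ n) (ha : D^[m] a = 0) :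
    D^[n] a = 0 := by
  rw [← Nat.sub_add_cancel hmn, Function.iterate_add_apply, ha, iterate_map_zero]

theorem iterate_mul_eq_zero {a b : A} {m n : ℕ} (ha : D^[m] a = 0) (hb : D^[n] b = 0) :
    D^[m + n] (a * b) = 0 := by
  rw [iterate_mul]
  refine Finset.sum_eq_zero fun ij hij => ?_
  rw [mem_antidiagonal] at hij
  rcases le_or_gt m ij.1 with hi | hi
  · rw [iterate_eq_zero_of_le hi ha, zero_mul, smul_zero]
  · rw [iterate_eq_zero_of_le (by omega : n ≤ ij.2) hb, mul_zero, smul_zero]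

theorem iterate_mul_of_iterate_succ_eq_zero {a b : A} {m n : ℕ} (ha : D^[m + 1] a = 0)
    (hb : D^[n + 1] b = 0) :
    D^[m + n] (a * b) = (m + n).choose m • (D^[m] a * D^[n] b) := by
  rw [iterate_mul]
  refine Finset.sum_eq_single_of_mem (m, n) (mem_antidiagonal.2 rfl) fun ij hij hne => ?_
  rw [mem_antidiagonal] at hij
  rcases lt_trichotomy ij.1 m with hi | hi | hi
  · rw [iterate_eq_zero_of_le (by omega : n + 1 ≤ ij.2) hb, mul_zero, smul_zero]
  · exact absurd (Prod.ext hi (by omega)) hne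
  · rw [iterate_eq_zero_of_le hi ha, zero_mul, smul_zero]

end Derivation

section LocallyNilpotent

variable {R A : Type*} [CommRing R] [CommRing A] [Algebra R A] {D : Derivation R A A}

/-- A derivation is locally nilpotent if each element of the ring is annihilated by some
iterate of it. -/
def IsLocallyNilpotent (D : Derivation R A A) : Prop :=
  ∀ a, ∃ n : ℕ, D^[n] a = 0

theorem isLocallyNilpotent_of_adjoin_eq_top {s : Set A} (hs : Algebra.adjoin R s = ⊤)
    (h : ∀ a ∈ s, ∃ n : ℕ, D^[n] a = 0) : IsLocallyNilpotent D := by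
  intro a
  have ha : a ∈ Algebra.adjoin R s := hs ▸ Algebra.mem_top
  induction ha using Algebra.adjoin_induction with
  | mem x hx => exact h x hx
  | algebraMap r => exact ⟨1, D.map_algebraMap r⟩
  | add x y _ _ hx hy =>
    obtain ⟨⟨m, hm⟩, ⟨n, hn⟩⟩ := hx, hy
    refine ⟨max m n, ?_⟩
    rw [iterate_map_add, iterate_eq_zero_of_le (le_max_left m n) hm,
      iterate_eq_zero_of_le (le_max_right m n) hn, add_zero]
  | mul x y _ _ hx hy =>
    obtain ⟨⟨m, hm⟩, ⟨n, hn⟩⟩ := hx, hy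
    exact ⟨m + n, iterate_mul_eq_zero hm hn⟩

namespace IsLocallyNilpotent

theorem exists_iterate_ne_zero (hD : IsLocallyNilpotent D) {a : A} (ha : a ≠ 0) :
    ∃ n : ℕ, D^[n] a ≠ 0 ∧ D^[n + 1] a = 0 := by
  classical
  obtain ⟨n, hn⟩ := Nat.exists_eq_succ_of_ne_zero (n := Nat.find (hD a))
    fun h => ha ((Nat.find_eq_zero (hD a)).mp h)
  exact ⟨n, Nat.find_min (hD a) (by omega),
    (congrArg (fun k => D^[k] a) hn).symm.trans (Nat.find_spec (hD a))⟩

theorem exists_map_ne_zero_map_map_eq_zero (hD : IsLocallyNilpotent D) (hD0 : D ≠ 0) :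
    ∃ s, D s ≠ 0 ∧ D (D s) = 0 := by
  obtain ⟨a, ha⟩ := DFunLike.ne_iff.mp hD0
  obtain ⟨n, hn, hn'⟩ := hD.exists_iterate_ne_zero ha
  refine ⟨D^[n] a, ?_, ?_⟩
  · rwa [← Function.iterate_succ_apply' D, Function.iterate_succ_apply]
  · rwa [← Function.iterate_succ_apply' D, ← Function.iterate_succ_apply' D,
      Function.iterate_succ_apply]

theorem iterate_eq_zero_of_mul [IsDomain A] [CharZero A] (hD : IsLocallyNilpotent D) {a b : A}
    (ha : a ≠ 0) {n : ℕ} (hab : D^[n] (a * b) = 0) : D^[n] b = 0 := by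
  by_contra hb
  obtain ⟨r, hr, hr'⟩ := hD.exists_iterate_ne_zero ha
  obtain ⟨t, ht, ht'⟩ := hD.exists_iterate_ne_zero
    (fun h => hb (by rw [h, iterate_map_zero]) : b ≠ 0)
  have hnt : n ≤ t := by
    by_contra! htn
    exact hb (iterate_eq_zero_of_le htn ht')
  have hlead := iterate_mul_of_iterate_succ_eq_zero hr' ht'
  rw [iterate_eq_zero_of_le (hnt.trans (Nat.le_add_left t r)) hab] at hlead
  exact smul_ne_zero (Nat.choose_pos (Nat.le_add_right r t)).ne' (mul_ne_zero hr ht) hlead.symm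

theorem mem_kernel_of_dvd [IsDomain A] [CharZero A] (hD : IsLocallyNilpotent D) {a b : A}
    (hab : a ∣ b) (hb : b ≠ 0) (hDb : D b = 0) : D a = 0 := by
  obtain ⟨c, rfl⟩ := hab
  rw [mul_comm] at hb hDb
  exact hD.iterate_eq_zero_of_mul (left_ne_zero_of_mul hb) (n := 1) hDb

theorem of_intertwining {S B : Type*} [CommRing S] [CommRing B] [IsDomain B] [CharZero B]
    [Algebra S B] {E : Derivation S B B} (hE : IsLocallyNilpotent E) {θ : A →+* B}
    (hθ : Function.Injective θ) {k : B} (hk : k ≠ 0) (h : ∀ a, E (θ a) = k * θ (D a)) :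
    IsLocallyNilpotent D := by
  have transfer : ∀ (n : ℕ) (a : A), E^[n] (θ a) = 0 → D^[n] a = 0 := by
    intro n
    induction n with
    | zero => exact fun a ha => (map_eq_zero_iff θ hθ).mp ha
    | succ n ih =>
      intro a ha
      rw [Function.iterate_succ_apply, h] at ha
      exact ih (D a) (hE.iterate_eq_zero_of_mul hk ha)
  exact fun a => (hE (θ a)).imp fun n => transfer n a

theorem of_smul [IsDomain A] [CharZero A] {c : A} (hc : c ≠ 0) (h : IsLocallyNilpotent (c • D)) :
    IsLocallyNilpotent D :=
  h.of_intertwining (θ := RingHom.id A) Function.injective_id hc fun _ => rfl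

end IsLocallyNilpotent

end LocallyNilpotent

section Slice

variable {K A : Type*} [Field K] [CommRing A] [Algebra K A] {D : Derivation K A A}

theorem iterate_mul_pow_of_map_eq_one {c s : A} (hc : D c = 0) (hs : D s = 1) (n : ℕ) :
    D^[n] (c * s ^ n) = n.factorial • c := by
  induction n with
  | zero => simp
  | succ n ih =>
    have hstep : D (c * s ^ (n + 1)) = (n + 1) • (c * s ^ n) := by
      rw [map_mul_of_mem_kernel hc, D.leibniz_pow, hs, Nat.add_sub_cancel, smul_eq_mul, mul_one,
        mul_smul_comm]
    rw [Function.iterate_succ_apply, hstep, iterate_map_nsmul, ih, smul_smul, Nat.factorial_succ]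

theorem adjoin_insert_kernel_eq_top [CharZero K] (hD : IsLocallyNilpotent D) {s : A}
    (hs : D s = 1) : Algebra.adjoin K (insert s (kernel D : Set A)) = ⊤ := by
  set S := Algebra.adjoin K (insert s (kernel D : Set A))
  have hsS : s ∈ S := Algebra.subset_adjoin (Set.mem_insert _ _)
  have hkS : kernel D ≤ S := fun c hc => Algebra.subset_adjoin (Set.mem_insert_of_mem _ hc)
  have mem_of_iterate : ∀ (n : ℕ) (a : A), D^[n] a = 0 → a ∈ S := by
    intro n
    induction n with
    | zero => exact fun a ha => (show a = 0 from ha) ▸ zero_mem S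
    | succ n ih =>
      intro a ha
      set c := (n.factorial : K)⁻¹ • D^[n] a
      have hc : D c = 0 := by
        rw [D.map_smul, ← Function.iterate_succ_apply' D, ha, smul_zero]
      have hsub : D^[n] (a - c * s ^ n) = 0 := by
        rw [iterate_map_sub, iterate_mul_pow_of_map_eq_one hc hs, ← Nat.cast_smul_eq_nsmul K,
          smul_inv_smul₀ (Nat.cast_ne_zero.mpr n.factorial_ne_zero), sub_self]
      rw [← sub_add_cancel a (c * s ^ n)]
      exact add_mem (ih _ hsub) (mul_mem (hkS hc) (pow_mem hsS n))
  exact eq_top_iff.mpr fun a _ => (hD a).elim fun n => mem_of_iterate n a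

theorem adjoin_pair_eq_top_of_kernel_eq [CharZero K] (hD : IsLocallyNilpotent D) {v s : A}
    (hs : D s = 1) (hv : kernel D = Algebra.adjoin K {v}) : Algebra.adjoin K {v, s} = ⊤ := by
  rw [eq_top_iff, ← adjoin_insert_kernel_eq_top hD hs, Algebra.adjoin_le_iff, Set.insert_subset_iff,
    hv]
  exact ⟨Algebra.subset_adjoin (by simp), Algebra.adjoin_mono (by simp)⟩

end Slice

section Residue

variable {K A : Type*} [Field K] [CommRing A] [Algebra K A]

theorem algebraicIndependent_option_of_mk [IsDomain A] {ι : Type*} {π : A} (hπ : π ≠ 0) {a : ι → A}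
    (ha : AlgebraicIndependent K fun i => Ideal.Quotient.mk (Ideal.span {π}) (a i)) :
    AlgebraicIndependent K fun o : Option ι => o.elim π a := by
  let f := Ideal.Quotient.mkₐ K (Ideal.span {π})
  have hfa : AlgebraicIndependent K (f ∘ a) := ha
  rw [(hfa.of_comp f).option_iff_transcendental]
  intro halg
  obtain ⟨⟨r, hr⟩, hr0, hdvd⟩ := halg.exists_nonzero_dvd (mem_nonZeroDivisors_of_ne_zero hπ)
  rw [Algebra.adjoin_range_eq_range_aeval] at hr
  obtain ⟨P, rfl⟩ := hr
  have hfP : aeval (f ∘ a) P = 0 := by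
    refine (comp_aeval_apply a f P).symm.trans ?_
    exact Ideal.Quotient.eq_zero_iff_mem.mpr (Ideal.mem_span_singleton.mpr hdvd)
  refine hr0 (Subtype.ext ?_)
  change aeval a P = 0
  rw [hfa.eq_zero_of_aeval_eq_zero P hfP, map_zero]

theorem trdeg_quotient_span_singleton_add_one_le [IsDomain A] {π : A} (hπ : Prime π) :
    Algebra.trdeg K (A ⧸ Ideal.span {π}) + 1 ≤ Algebra.trdeg K A := by
  have := (Ideal.span_singleton_prime hπ.ne_zero).mpr hπ
  have := (faithfulSMul_iff_algebraMap_injective K (A ⧸ Ideal.span {π})).mpr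
    (algebraMap K (A ⧸ Ideal.span {π})).injective
  obtain ⟨s, hs⟩ := exists_isTranscendenceBasis K (A ⧸ Ideal.span {π})
  choose a ha using Ideal.Quotient.mk_surjective (I := Ideal.span {π})
  have hind : AlgebraicIndependent K fun i : s => Ideal.Quotient.mk (Ideal.span {π}) (a i) := by
    simpa only [ha] using hs.1
  rw [← hs.cardinalMk_eq_trdeg, ← Cardinal.mk_option]
  exact (algebraicIndependent_option_of_mk hπ.ne_zero hind).cardinalMk_le_trdeg

theorem mk_eq_algebraMap_iff_dvd {π a : A} {μ : K} :
    Ideal.Quotient.mk (Ideal.span {π}) a = algebraMap K (A ⧸ Ideal.span {π}) μ ↔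
      π ∣ a - algebraMap K A μ := by
  rw [← Ideal.mem_span_singleton, ← Ideal.Quotient.eq]
  rfl

theorem eq_algebraMap_of_isAlgebraic [IsDomain A] {b : A} (hb : IsAlgebraic K b) (ε : A →ₐ[K] K) :
    b = algebraMap K A (ε b) := by
  by_contra hne
  have hint : IsIntegral K (b - algebraMap K A (ε b)) := hb.isIntegral.sub isIntegral_algebraMap
  refine minpoly.coeff_zero_ne_zero hint (sub_ne_zero.mpr hne) ?_
  have hroot := congrArg ε (minpoly.aeval K (b - algebraMap K A (ε b)))
  rwa [← Polynomial.aeval_algHom_apply, map_sub, AlgHom.commutes, Algebra.algebraMap_self_apply,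
    sub_self, map_zero, ← Polynomial.coeff_zero_eq_aeval_zero] at hroot

theorem dvd_sub_algebraMap_of_isAlgebraic_mk {π : A} (hπ : Prime π) {ε : A →ₐ[K] K}
    (hε : ε π = 0) {c : A} (hc : IsAlgebraic K (Ideal.Quotient.mk (Ideal.span {π}) c)) :
    π ∣ c - algebraMap K A (ε c) := by
  have := (Ideal.span_singleton_prime hπ.ne_zero).mpr hπ
  have hker : ∀ a ∈ Ideal.span {π}, ε a = 0 := by
    intro a ha
    obtain ⟨b, rfl⟩ := Ideal.mem_span_singleton.mp ha
    rw [map_mul, hε, zero_mul]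
  rw [← mk_eq_algebraMap_iff_dvd]
  exact eq_algebraMap_of_isAlgebraic hc (Ideal.Quotient.liftₐ _ ε hker)

theorem exists_dvd_sub_algebraMap_of_isAlgebraic_mk [IsAlgClosed K] {π : A} (hπ : Prime π) {c : A}
    (hc : IsAlgebraic K (Ideal.Quotient.mk (Ideal.span {π}) c)) :
    ∃ μ : K, π ∣ c - algebraMap K A μ := by
  have := (Ideal.span_singleton_prime hπ.ne_zero).mpr hπ
  obtain ⟨μ, hμ⟩ := minpoly.mem_range_of_degree_eq_one K _
    (IsAlgClosed.degree_eq_one_of_irreducible K (minpoly.irreducible hc.isIntegral))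
  exact ⟨μ, mk_eq_algebraMap_iff_dvd.mp hμ.symm⟩

variable [IsDomain A] {D : Derivation K A A}

theorem isAlgebraic_mk_of_mem_kernel [CharZero A] (htr : Algebra.trdeg K A ≤ 2) (hD : D ≠ 0)
    {π : A} (hπ : π ≠ 0) (hDπ : D π = 0) {c : A} (hDc : D c = 0) :
    IsAlgebraic K (Ideal.Quotient.mk (Ideal.span {π}) c) := by
  by_contra hc
  have hind := algebraicIndependent_option_of_mk hπ (a := fun _ : Unit => c)
    (algebraicIndependent_unique_type_iff.mpr hc)
  exact hD (eq_zero_of_algebraicIndependent_of_trdeg_le hind (by simpa using htr) fun o => by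
    cases o <;> assumption)

theorem isAlgebraic_mk_or_forall_dvd [CharZero K] (htr : Algebra.trdeg K A ≤ 2) {π : A}
    (hπ : Prime π) (hDπ : D π = 0) {s : A} (hs : π ∣ D s) :
    IsAlgebraic K (Ideal.Quotient.mk (Ideal.span {π}) s) ∨ ∀ a, π ∣ D a := by
  have := (Ideal.span_singleton_prime hπ.ne_zero).mpr hπ
  have := charZero_of_injective_algebraMap (algebraMap K (A ⧸ Ideal.span {π})).injective
  let f := Ideal.Quotient.mkₐ K (Ideal.span {π})
  have hf : Function.Surjective f := Ideal.Quotient.mkₐ_surjective K _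
  have hf0 {a : A} : f a = 0 ↔ π ∣ a :=
    Ideal.Quotient.eq_zero_iff_mem.trans Ideal.mem_span_singleton
  have hDf : ∀ a, f a = 0 → f (D a) = 0 := by
    intro a ha
    obtain ⟨b, rfl⟩ := hf0.mp ha
    exact hf0.mpr (map_mul_of_mem_kernel hDπ b ▸ dvd_mul_right π (D b))
  let E := Derivation.liftOfSurjective hf hDf
  have hE (a : A) : E (f a) = f (D a) := Derivation.liftOfSurjective_apply hf hDf a
  refine or_iff_not_imp_left.mpr fun htrans a => ?_
  have htrE : Algebra.trdeg K (A ⧸ Ideal.span {π}) ≤ 1 := by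
    rw [← Cardinal.add_one_le_add_one_iff, one_add_one_eq_two]
    exact (trdeg_quotient_span_singleton_add_one_le hπ).trans htr
  have hE0 : E = 0 := eq_zero_of_algebraicIndependent_of_trdeg_le (x := fun _ : Unit => f s)
    (algebraicIndependent_unique_type_iff.mpr htrans) (by simpa using htrE)
    fun _ => (hE s).trans (hf0.mpr hs)
  rw [← hf0, ← hE, hE0, Derivation.zero_apply]

end Residue

section Plinth

variable {K A : Type*} [Field K] [CommRing A] [Algebra K A]

/-- `g` is a nonzero univariate polynomial of least degree such that `g(v)` lies in the image of
`D`. When `v` generates the kernel of `D`, such a `g(v)` generates the plinth ideal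
`ker D ∩ im D` of `D`. -/
structure IsMinimalPlinth (D : Derivation K A A) (v : A) (g : Polynomial K) : Prop where
  ne_zero : g ≠ 0
  mem_range : ∃ s, D s = Polynomial.aeval v g
  natDegree_le : ∀ (h : Polynomial K) (t : A), h ≠ 0 → D t = Polynomial.aeval v h →
    g.natDegree ≤ h.natDegree

theorem exists_isMinimalPlinth {D : Derivation K A A} {v s : A} {g : Polynomial K}
    (hg : g ≠ 0) (hs : D s = Polynomial.aeval v g) : ∃ g, IsMinimalPlinth D v g := by
  obtain ⟨g, ⟨hg, hrange⟩, hmin⟩ := exists_minimalFor_of_wellFoundedLT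
    (fun g : Polynomial K => g ≠ 0 ∧ ∃ s, D s = Polynomial.aeval v g) Polynomial.natDegree
    ⟨g, hg, s, hs⟩
  exact ⟨g, hg, hrange, fun h t hh ht => le_of_not_gt fun hlt =>
    hlt.not_ge (hmin ⟨hh, t, ht⟩ hlt.le)⟩

theorem aeval_X_sub_C_mul (v : A) (l : K) (g : Polynomial K) :
    Polynomial.aeval v ((Polynomial.X - Polynomial.C l) * g) =
      (v - algebraMap K A l) * Polynomial.aeval v g := by
  simp only [map_mul, map_sub, Polynomial.aeval_X, Polynomial.aeval_C]

theorem map_sub_algebraMap (D : Derivation K A A) (a : A) (l : K) :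
    D (a - algebraMap K A l) = D a := by
  rw [map_sub, D.map_algebraMap, sub_zero]

variable [IsDomain A] {v : A} {l : K} {g : Polynomial K}

theorem IsMinimalPlinth.forall_dvd [CharZero K] [IsAlgClosed K] (htr : Algebra.trdeg K A ≤ 2)
    (hprime : Prime (v - algebraMap K A l)) {D : Derivation K A A} (hDv : D v = 0)
    (hg : IsMinimalPlinth D v ((Polynomial.X - Polynomial.C l) * g)) (a : A) :
    v - algebraMap K A l ∣ D a := by
  obtain ⟨s, hs⟩ := hg.mem_range
  rw [aeval_X_sub_C_mul] at hs
  have hDπ : D (v - algebraMap K A l) = 0 := (map_sub_algebraMap D v l).trans hDv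
  have hg0 : g ≠ 0 := right_ne_zero_of_mul hg.ne_zero
  refine (isAlgebraic_mk_or_forall_dvd htr hprime hDπ (Dvd.intro _ hs.symm)).resolve_left
    (fun halg => ?_) a
  obtain ⟨μ, t, ht⟩ := exists_dvd_sub_algebraMap_of_isAlgebraic_mk hprime halg
  have hDt : D t = Polynomial.aeval v g := by
    refine mul_left_cancel₀ hprime.ne_zero ?_
    rw [← map_mul_of_mem_kernel hDπ, ← ht, map_sub_algebraMap, hs]
  have hdeg := hg.natDegree_le g t hg0 hDt
  rw [Polynomial.natDegree_mul (Polynomial.X_sub_C_ne_zero l) hg0,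
    Polynomial.natDegree_X_sub_C] at hdeg
  omega

theorem IsMinimalPlinth.of_smul {D : Derivation K A A} (hv : v - algebraMap K A l ≠ 0)
    (hg : IsMinimalPlinth ((v - algebraMap K A l) • D) v
      ((Polynomial.X - Polynomial.C l) * g)) : IsMinimalPlinth D v g where
  ne_zero := right_ne_zero_of_mul hg.ne_zero
  mem_range := by
    obtain ⟨s, hs⟩ := hg.mem_range
    exact ⟨s, mul_left_cancel₀ hv (hs.trans (aeval_X_sub_C_mul v l g))⟩
  natDegree_le h t hh ht := by
    have hX := Polynomial.X_sub_C_ne_zero l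
    have hdeg := hg.natDegree_le ((Polynomial.X - Polynomial.C l) * h) t (mul_ne_zero hX hh) <| by
      rw [Derivation.smul_apply, ht, aeval_X_sub_C_mul, smul_eq_mul]
    rwa [Polynomial.natDegree_mul hX (right_ne_zero_of_mul hg.ne_zero),
      Polynomial.natDegree_mul hX hh, add_le_add_iff_left] at hdeg

theorem IsMinimalPlinth.aeval_dvd [CharZero K] [IsAlgClosed K] (htr : Algebra.trdeg K A ≤ 2)
    (hprime : ∀ l : K, Prime (v - algebraMap K A l)) {D : Derivation K A A} (hDv : D v = 0)
    (hg : IsMinimalPlinth D v g) (a : A) : Polynomial.aeval v g ∣ D a := by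
  induction hn : g.natDegree generalizing D g with
  | zero =>
    rw [Polynomial.eq_C_of_natDegree_eq_zero hn, Polynomial.aeval_C]
    refine (IsUnit.map (algebraMap K A) (isUnit_iff_ne_zero.mpr fun h0 => hg.ne_zero ?_)).dvd
    rw [Polynomial.eq_C_of_natDegree_eq_zero hn, h0, map_zero]
  | succ n ih =>
    obtain ⟨l, hl⟩ := IsAlgClosed.exists_root g
      (Polynomial.natDegree_pos_iff_degree_pos.mp (hn ▸ n.succ_pos)).ne'
    obtain ⟨g, rfl⟩ := Polynomial.dvd_iff_isRoot.mpr hl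
    have hπ := (hprime l).ne_zero
    obtain ⟨D, rfl⟩ := exists_eq_smul_of_forall_dvd hπ (hg.forall_dvd htr (hprime l) hDv)
    rw [Polynomial.natDegree_mul (Polynomial.X_sub_C_ne_zero l) (right_ne_zero_of_mul hg.ne_zero),
      Polynomial.natDegree_X_sub_C, add_comm, add_left_inj] at hn
    rw [aeval_X_sub_C_mul]
    exact mul_dvd_mul_left _ (ih ((mul_eq_zero.mp hDv).resolve_left hπ) (hg.of_smul hπ) hn)

end Plinth

section MinimalConstant

variable {K σ : Type*} [Field K]
  {D : Derivation K (MvPolynomial σ K) (MvPolynomial σ K)} {v : MvPolynomial σ K}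

/-- `v` is a nonconstant polynomial of least total degree in the kernel of `D`. In two variables,
and for `D` locally nilpotent and nonzero, such a `v` generates the kernel. -/
structure IsMinimalConstant (D : Derivation K (MvPolynomial σ K) (MvPolynomial σ K))
    (v : MvPolynomial σ K) : Prop where
  map_eq_zero : D v = 0
  totalDegree_pos : 0 < v.totalDegree
  totalDegree_le : ∀ c, D c = 0 → 0 < c.totalDegree → v.totalDegree ≤ c.totalDegree

theorem exists_isMinimalConstant {c : MvPolynomial σ K} (hDc : D c = 0) (hc : 0 < c.totalDegree) :
    ∃ v, IsMinimalConstant D v := by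
  obtain ⟨v, ⟨hDv, hv⟩, hmin⟩ := exists_minimalFor_of_wellFoundedLT
    (fun c => D c = 0 ∧ 0 < c.totalDegree) totalDegree ⟨c, hDc, hc⟩
  exact ⟨v, hDv, hv, fun d hDd hd => (le_total _ _).elim id (hmin ⟨hDd, hd⟩)⟩

theorem isUnit_of_totalDegree_eq_zero {a : MvPolynomial σ K} (ha : a ≠ 0)
    (hdeg : a.totalDegree = 0) : IsUnit a := by
  rw [totalDegree_eq_zero_iff_eq_C] at hdeg
  rw [hdeg]
  exact (isUnit_iff_ne_zero.mpr fun h0 => ha (by rw [hdeg, h0, C_0])).map C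

theorem totalDegree_sub_C (a : MvPolynomial σ K) (l : K) :
    (a - C l).totalDegree = a.totalDegree := by
  refine le_antisymm (totalDegree_sub_C_le a l) ?_
  have hle := totalDegree_sub_C_le (a - C l) (-l)
  rwa [C_neg, sub_neg_eq_add, sub_add_cancel] at hle

namespace IsMinimalConstant

theorem prime_sub_C [CharZero K] (hD : IsLocallyNilpotent D) (hv : IsMinimalConstant D v) (l : K) :
    Prime (v - C l) := by
  have hpos : 0 < (v - C l).totalDegree := totalDegree_sub_C v l ▸ hv.totalDegree_pos
  have hne : v - C l ≠ 0 := fun h => by simp [h] at hpos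
  have hDv : D (v - C l) = 0 := (map_sub_algebraMap D v l).trans hv.map_eq_zero
  refine Irreducible.prime ⟨fun hunit => ?_, fun a b hab => ?_⟩
  · obtain ⟨r, -, hr⟩ := MvPolynomial.isUnit_iff_eq_C_of_isReduced.mp hunit
    rw [hr, totalDegree_C] at hpos
    exact hpos.false
  · have ha := hD.mem_kernel_of_dvd (Dvd.intro _ hab.symm) hne hDv
    have hb := hD.mem_kernel_of_dvd (Dvd.intro_left _ hab.symm) hne hDv
    have ha0 : a ≠ 0 := left_ne_zero_of_mul (hab ▸ hne)
    have hb0 : b ≠ 0 := right_ne_zero_of_mul (hab ▸ hne)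
    by_contra! hunits
    have hva := hv.totalDegree_le a ha <| Nat.pos_of_ne_zero fun h =>
      hunits.1 (isUnit_of_totalDegree_eq_zero ha0 h)
    have hvb := hv.totalDegree_le b hb <| Nat.pos_of_ne_zero fun h =>
      hunits.2 (isUnit_of_totalDegree_eq_zero hb0 h)
    have hdeg := totalDegree_mul_of_isDomain ha0 hb0
    rw [← hab, totalDegree_sub_C] at hdeg
    have := hv.totalDegree_pos
    omega

theorem kernel_eq_adjoin [CharZero K] (htr : Algebra.trdeg K (MvPolynomial σ K) ≤ 2)
    (hD : IsLocallyNilpotent D) (hD0 : D ≠ 0) (hv : IsMinimalConstant D v) :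
    kernel D = Algebra.adjoin K {v} := by
  refine le_antisymm (fun c hDc => ?_) (Algebra.adjoin_le (by simpa using hv.map_eq_zero))
  -- The rational point `0` of the curve `v = v(0)` makes every constant of that curve lie in `K`,
  -- so the base field need not be algebraically closed.
  let ε : MvPolynomial σ K →ₐ[K] K := aeval 0
  set π := v - C (ε v)
  have hπ : Prime π := hv.prime_sub_C hD (ε v)
  have hDπ : D π = 0 := (map_sub_algebraMap D v (ε v)).trans hv.map_eq_zero
  have hπv : π ∈ Algebra.adjoin K {v} :=
    sub_mem (Algebra.self_mem_adjoin_singleton K v) (Subalgebra.algebraMap_mem _ (ε v))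
  have hεπ : ε π = 0 := by
    rw [map_sub, ← algebraMap_eq, AlgHom.commutes, Algebra.algebraMap_self_apply, sub_self]
  induction hn : c.totalDegree using Nat.strong_induction_on generalizing c with
  | _ n ih =>
    obtain ⟨b, hb⟩ := dvd_sub_algebraMap_of_isAlgebraic_mk hπ hεπ
      (isAlgebraic_mk_of_mem_kernel htr hD0 hπ.ne_zero hDπ hDc)
    rw [sub_eq_iff_eq_add.mp hb]
    refine add_mem (mul_mem hπv ?_) (Subalgebra.algebraMap_mem _ _)
    rcases eq_or_ne b 0 with rfl | hb0
    · exact zero_mem _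
    have hDb : D b = 0 := by
      refine (mul_eq_zero.mp ?_).resolve_left hπ.ne_zero
      rw [← map_mul_of_mem_kernel hDπ, ← hb, map_sub_algebraMap, mem_kernel.mp hDc]
    have hdeg := totalDegree_mul_of_isDomain hπ.ne_zero hb0
    rw [← hb, algebraMap_eq, totalDegree_sub_C, totalDegree_sub_C] at hdeg
    exact ih b.totalDegree (by have := hv.totalDegree_pos; omega) b hDb rfl

end IsMinimalConstant

end MinimalConstant

section BaseChange

variable {K L σ : Type*} [Field K] [Field L] [Algebra K L]

/-- Application of a `K`-linear functional `ℓ` on `L` to each coefficient of a polynomial over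
`L`; it sends `c • a`, for `c` in `L` and `a` a polynomial over `K`, to `ℓ c • a`. Such
functionals carry minimality over `K` to minimality over `L` and divisibility over `L` back to
`K`. -/
noncomputable def mapCoeff (ℓ : L →ₗ[K] K) (f : MvPolynomial σ L) : MvPolynomial σ K :=
  AddMonoidAlgebra.map ℓ.toAddMonoidHom f

@[simp]
theorem coeff_mapCoeff (ℓ : L →ₗ[K] K) (f : MvPolynomial σ L) (m : σ →₀ ℕ) :
    coeff m (mapCoeff ℓ f) = ℓ (coeff m f) :=
  rfl

theorem mapCoeff_zero (ℓ : L →ₗ[K] K) : mapCoeff ℓ (0 : MvPolynomial σ L) = 0 := by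
  ext m; simp

theorem mapCoeff_add (ℓ : L →ₗ[K] K) (f g : MvPolynomial σ L) :
    mapCoeff ℓ (f + g) = mapCoeff ℓ f + mapCoeff ℓ g := by
  ext m; simp

theorem mapCoeff_map_mul (ℓ : L →ₗ[K] K) (a : MvPolynomial σ K) (f : MvPolynomial σ L) :
    mapCoeff ℓ (map (algebraMap K L) a * f) = a * mapCoeff ℓ f := by
  classical
  ext m
  simp only [coeff_mapCoeff, coeff_mul, map_sum, coeff_map, ← Algebra.smul_def, map_smul,
    smul_eq_mul]

theorem mapCoeff_smul_map (ℓ : L →ₗ[K] K) (c : L) (a : MvPolynomial σ K) :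
    mapCoeff ℓ (c • map (algebraMap K L) a) = ℓ c • a := by
  ext m
  rw [coeff_mapCoeff, coeff_smul, coeff_map, smul_eq_mul, mul_comm, ← Algebra.smul_def, map_smul,
    coeff_smul, smul_eq_mul, smul_eq_mul, mul_comm]

theorem mapCoeff_map {ℓ : L →ₗ[K] K} (hℓ : ℓ 1 = 1) (a : MvPolynomial σ K) :
    mapCoeff ℓ (map (algebraMap K L) a) = a := by
  simpa [hℓ] using mapCoeff_smul_map ℓ 1 a

theorem totalDegree_mapCoeff_le (ℓ : L →ₗ[K] K) (f : MvPolynomial σ L) :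
    (mapCoeff ℓ f).totalDegree ≤ f.totalDegree := by
  refine Finset.sup_mono fun m hm => ?_
  rw [mem_support_iff, coeff_mapCoeff] at hm
  exact mem_support_iff.mpr fun h => hm (by rw [h, map_zero])

theorem exists_aeval_eq_mapCoeff_aeval (ℓ : L →ₗ[K] K) (v : MvPolynomial σ K) (g : Polynomial L) :
    ∃ h : Polynomial K, (∀ n, h.coeff n = ℓ (g.coeff n)) ∧
      Polynomial.aeval v h = mapCoeff ℓ (Polynomial.aeval (map (algebraMap K L) v) g) := by
  induction g using Polynomial.induction_on' with
  | add g₁ g₂ ih₁ ih₂ =>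
    obtain ⟨⟨h₁, hc₁, hv₁⟩, ⟨h₂, hc₂, hv₂⟩⟩ := ih₁, ih₂
    exact ⟨h₁ + h₂, fun n => by simp [hc₁, hc₂], by simp only [map_add, hv₁, hv₂, mapCoeff_add]⟩
  | monomial n c =>
    refine ⟨Polynomial.monomial n (ℓ c), fun k => ?_, ?_⟩
    · rw [Polynomial.coeff_monomial, Polynomial.coeff_monomial, apply_ite ℓ, map_zero]
    · rw [Polynomial.aeval_monomial, Polynomial.aeval_monomial, ← Algebra.smul_def,
        ← Algebra.smul_def, ← map_pow, mapCoeff_smul_map]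

theorem map_aeval (v : MvPolynomial σ K) (g : Polynomial K) :
    map (algebraMap K L) (Polynomial.aeval v g) =
      Polynomial.aeval (map (algebraMap K L) v) (g.map (algebraMap K L)) :=
  Polynomial.map_aeval_eq_aeval_map (by ext; simp) g v

theorem exists_linearMap_apply_eq_one {c : L} (hc : c ≠ 0) : ∃ ℓ : L →ₗ[K] K, ℓ c = 1 := by
  obtain ⟨ℓ, -, hℓ⟩ := LinearMap.exists_extend_of_notMem (p := (⊥ : Submodule K L)) (v := c)
    (0 : (⊥ : Submodule K L) →ₗ[K] K) (by simpa using hc) 1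
  exact ⟨ℓ, hℓ⟩

variable (L) in
/-- The `L`-linear extension to `L[x]` of a `K`-derivation of `K[x]`. -/
noncomputable def baseChange (D : Derivation K (MvPolynomial σ K) (MvPolynomial σ K)) :
    Derivation L (MvPolynomial σ L) (MvPolynomial σ L) :=
  mkDerivation L fun i => map (algebraMap K L) (D (X i))

variable {D : Derivation K (MvPolynomial σ K) (MvPolynomial σ K)}

theorem baseChange_map (a : MvPolynomial σ K) :
    baseChange L D (map (algebraMap K L) a) = map (algebraMap K L) (D a) := by
  induction a using MvPolynomial.induction_on with
  | C r => rw [map_C, derivation_C, derivation_C, map_zero]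
  | add a b ha hb => simp only [map_add, ha, hb]
  | mul_X a i ha =>
    have hX : baseChange L D (X i) = map (algebraMap K L) (D (X i)) := mkDerivation_X _ _ _
    simp only [map_mul, map_X, Derivation.leibniz, ha, hX, smul_eq_mul, map_add]

theorem mapCoeff_baseChange (ℓ : L →ₗ[K] K) (f : MvPolynomial σ L) :
    mapCoeff ℓ (baseChange L D f) = D (mapCoeff ℓ f) := by
  induction f using MvPolynomial.induction_on' with
  | monomial m c =>
    have hmon : monomial m c = c • map (algebraMap K L) (monomial m 1) := by
      rw [map_monomial, map_one, smul_monomial, smul_eq_mul, mul_one]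
    rw [hmon, Derivation.map_smul, baseChange_map, mapCoeff_smul_map, mapCoeff_smul_map, D.map_smul]
  | add f g hf hg => rw [map_add, mapCoeff_add, hf, hg, mapCoeff_add, map_add]

theorem isLocallyNilpotent_baseChange (hD : IsLocallyNilpotent D) :
    IsLocallyNilpotent (baseChange L D) := by
  refine isLocallyNilpotent_of_adjoin_eq_top adjoin_range_X ?_
  rintro _ ⟨i, rfl⟩
  obtain ⟨n, hn⟩ := hD (X i)
  have hsemi : Function.Semiconj (map (algebraMap K L)) D (baseChange L D) :=
    fun a => (baseChange_map a).symm
  refine ⟨n, ?_⟩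
  rw [← map_X (algebraMap K L), ← (hsemi.iterate_right n).eq, hn, map_zero]

theorem totalDegree_pos_iff {R : Type*} [CommSemiring R] {c : MvPolynomial σ R} :
    0 < c.totalDegree ↔ ∃ m ≠ 0, coeff m c ≠ 0 := by
  rw [Nat.pos_iff_ne_zero, Ne, totalDegree_eq_zero_iff]
  simp only [mem_support_iff, not_forall, Ne, Finsupp.ext_iff, Finsupp.coe_zero, Pi.zero_apply,
    exists_prop, and_comm]

theorem IsMinimalConstant.baseChange {v : MvPolynomial σ K} (hv : IsMinimalConstant D v) :
    IsMinimalConstant (baseChange L D) (map (algebraMap K L) v) := by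
  have hdeg : (map (algebraMap K L) v).totalDegree = v.totalDegree := by
    simp only [totalDegree, support_map_of_injective _ (algebraMap K L).injective]
  refine ⟨?_, hdeg ▸ hv.totalDegree_pos, fun c hDc hc => hdeg ▸ ?_⟩
  · rw [baseChange_map, hv.map_eq_zero, map_zero]
  obtain ⟨m, hm, hcm⟩ := totalDegree_pos_iff.mp hc
  obtain ⟨ℓ, hℓ⟩ := exists_linearMap_apply_eq_one (K := K) hcm
  refine (hv.totalDegree_le (mapCoeff ℓ c) ?_ ?_).trans (totalDegree_mapCoeff_le ℓ c)
  · rw [← mapCoeff_baseChange, hDc, mapCoeff_zero]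
  · exact totalDegree_pos_iff.mpr ⟨m, hm, by rw [coeff_mapCoeff, hℓ]; exact one_ne_zero⟩

theorem IsMinimalPlinth.baseChange {v : MvPolynomial σ K} {g : Polynomial K}
    (hg : IsMinimalPlinth D v g) :
    IsMinimalPlinth (baseChange L D) (map (algebraMap K L) v) (g.map (algebraMap K L)) where
  ne_zero := (Polynomial.map_ne_zero_iff (algebraMap K L).injective).mpr hg.ne_zero
  mem_range := by
    obtain ⟨s, hs⟩ := hg.mem_range
    refine ⟨map (algebraMap K L) s, ?_⟩
    rw [baseChange_map, hs, map_aeval]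
  natDegree_le h t hh ht := by
    rw [Polynomial.natDegree_map]
    obtain ⟨ℓ, hℓ⟩ :=
      exists_linearMap_apply_eq_one (K := K) (Polynomial.leadingCoeff_ne_zero.mpr hh)
    obtain ⟨h', hcoeff, hv⟩ := exists_aeval_eq_mapCoeff_aeval ℓ v h
    have hh' : h' ≠ 0 := by
      rintro rfl
      have := hcoeff h.natDegree
      rw [Polynomial.coeff_natDegree, hℓ, Polynomial.coeff_zero] at this
      exact zero_ne_one this
    refine (hg.natDegree_le h' (mapCoeff ℓ t) hh' ?_).trans ?_
    · rw [← mapCoeff_baseChange, ht, hv]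
    · rw [Polynomial.natDegree_le_iff_coeff_eq_zero]
      intro n hn
      rw [hcoeff, Polynomial.coeff_eq_zero_of_natDegree_lt hn, map_zero]

end BaseChange

section Coordinate

variable {K : Type*} [Field K]

/-- A polynomial `v` in two variables is a coordinate if `K[v, s] = K[x, y]` for some `s`. -/
def IsCoordinate (v : MvPolynomial (Fin 2) K) : Prop :=
  ∃ s, Algebra.adjoin K {v, s} = ⊤

theorem bijective_of_surjective {σ : Type*} [Finite σ]
    {f : MvPolynomial σ K →ₐ[K] MvPolynomial σ K} (hf : Function.Surjective f) :
    Function.Bijective f := by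
  have hf_eq : aeval (f ∘ X) = f := (MvPolynomial.aeval_unique f).symm
  have hrange : Algebra.adjoin K (Set.range (f ∘ X)) = ⊤ := by
    rw [Algebra.adjoin_range_eq_range_aeval, hf_eq, AlgHom.range_eq_top]
    exact hf
  have : Algebra.IsAlgebraic (Algebra.adjoin K (Set.range (f ∘ X))) (MvPolynomial σ K) := by
    rw [hrange]
    exact ⟨fun a => isAlgebraic_algebraMap (⟨a, Algebra.mem_top⟩ : (⊤ : Subalgebra K _))⟩
  have hbasis := Algebra.IsAlgebraic.isTranscendenceBasis_of_lift_le_trdeg_of_finite K (f ∘ X) <| by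
    rw [MvPolynomial.trdeg_of_isDomain]
    simp
  have hinj : Function.Injective (aeval (f ∘ X)) := hbasis.1
  exact ⟨hf_eq ▸ hinj, hf⟩

namespace IsCoordinate

variable {v w : MvPolynomial (Fin 2) K}

theorem exists_algEquiv_X_zero (hv : IsCoordinate v) :
    ∃ α : MvPolynomial (Fin 2) K ≃ₐ[K] MvPolynomial (Fin 2) K, α (X 0) = v := by
  obtain ⟨s, hs⟩ := hv
  have hsurj : Function.Surjective (aeval (R := K) ![v, s]) := by
    rw [← AlgHom.range_eq_top, ← Algebra.adjoin_range_eq_range_aeval, Matrix.range_cons_cons_empty,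
      hs]
  exact ⟨AlgEquiv.ofBijective _ (bijective_of_surjective hsurj), by simp⟩

theorem exists_algEquiv (hv : IsCoordinate v) (hw : IsCoordinate w) :
    ∃ α : MvPolynomial (Fin 2) K ≃ₐ[K] MvPolynomial (Fin 2) K, α v = w := by
  obtain ⟨α, rfl⟩ := hv.exists_algEquiv_X_zero
  obtain ⟨β, rfl⟩ := hw.exists_algEquiv_X_zero
  exact ⟨α.symm.trans β, by simp⟩

theorem of_mem_adjoin (hw : IsCoordinate w) (hwv : w ∈ Algebra.adjoin K {v}) : IsCoordinate v := by
  obtain ⟨s, hs⟩ := hw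
  refine ⟨s, eq_top_iff.mpr (hs ▸ Algebra.adjoin_le (Set.pair_subset ?_ ?_))⟩
  · exact Algebra.adjoin_mono (by simp) hwv
  · exact Algebra.subset_adjoin (by simp)

end IsCoordinate

end Coordinate

section Rentschler

theorem trdeg_fin_two_le {K : Type*} [Field K] :
    Algebra.trdeg K (MvPolynomial (Fin 2) K) ≤ 2 := by
  rw [MvPolynomial.trdeg_of_isDomain]
  simp

variable {K : Type*} [Field K] [CharZero K]
  {D : Derivation K (MvPolynomial (Fin 2) K) (MvPolynomial (Fin 2) K)} {v : MvPolynomial (Fin 2) K}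

theorem IsMinimalConstant.aeval_dvd (hD : IsLocallyNilpotent D) (hv : IsMinimalConstant D v)
    {g : Polynomial K} (hg : IsMinimalPlinth D v g) (a : MvPolynomial (Fin 2) K) :
    Polynomial.aeval v g ∣ D a := by
  let L := AlgebraicClosure K
  have : CharZero L := charZero_of_injective_algebraMap (algebraMap K L).injective
  obtain ⟨b, hb⟩ := hg.baseChange.aeval_dvd trdeg_fin_two_le
    (hv.baseChange.prime_sub_C (isLocallyNilpotent_baseChange hD)) hv.baseChange.map_eq_zero
    (map (algebraMap K L) a)
  obtain ⟨ℓ, hℓ⟩ := exists_linearMap_apply_eq_one (K := K) (one_ne_zero (α := L))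
  refine ⟨mapCoeff ℓ b, ?_⟩
  rw [← mapCoeff_map_mul, map_aeval, ← hb, baseChange_map, mapCoeff_map hℓ]

theorem IsMinimalConstant.isCoordinate (hv : IsMinimalConstant D v)
    (hD : IsLocallyNilpotent D) (hD0 : D ≠ 0) (hker : kernel D = Algebra.adjoin K {v}) :
    IsCoordinate v := by
  obtain ⟨s, hs, hDs⟩ := hD.exists_map_ne_zero_map_map_eq_zero hD0
  rw [← mem_kernel, hker, Algebra.adjoin_singleton_eq_range_aeval] at hDs
  obtain ⟨g, hgs⟩ := hDs
  obtain ⟨g, hg⟩ := exists_isMinimalPlinth (fun h => hs (by rw [← hgs, h]; exact map_zero _))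
    hgs.symm
  have hdvd := hv.aeval_dvd hD hg
  have hg0 : Polynomial.aeval v g ≠ 0 := fun h =>
    hD0 (Derivation.ext fun a => zero_dvd_iff.mp (h ▸ hdvd a))
  obtain ⟨E, rfl⟩ := exists_eq_smul_of_forall_dvd hg0 hdvd
  obtain ⟨t, ht⟩ := hg.mem_range
  have hslice : E t = 1 := mul_left_cancel₀ hg0 (ht.trans (mul_one _).symm)
  rw [kernel_smul E hg0] at hker
  exact ⟨t, adjoin_pair_eq_top_of_kernel_eq (hD.of_smul hg0) hslice hker⟩

theorem IsLocallyNilpotent.exists_isCoordinate_kernel_eq_adjoin (hD : IsLocallyNilpotent D)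
    (hD0 : D ≠ 0) {c : MvPolynomial (Fin 2) K} (hDc : D c = 0) (hc : 0 < c.totalDegree) :
    ∃ v, IsCoordinate v ∧ kernel D = Algebra.adjoin K {v} := by
  obtain ⟨v, hv⟩ := exists_isMinimalConstant hDc hc
  have hker := hv.kernel_eq_adjoin trdeg_fin_two_le hD hD0
  exact ⟨v, hv.isCoordinate hD hD0 hker, hker⟩

end Rentschler

section PartialDerivative

variable {R ι σ : Type*} [CommRing R]

theorem isLocallyNilpotent_pderiv (i : σ) :
    IsLocallyNilpotent (pderiv i : Derivation R (MvPolynomial σ R) (MvPolynomial σ R)) := by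
  classical
  refine isLocallyNilpotent_of_adjoin_eq_top MvPolynomial.adjoin_range_X ?_
  rintro _ ⟨j, rfl⟩
  exact ⟨2, by simp [pderiv_X, Pi.single_apply, apply_ite]⟩

theorem derivation_algHom_apply [Fintype ι] {B : Type*} [CommRing B] [Algebra R B]
    (E : Derivation R B B) (θ : MvPolynomial ι R →ₐ[R] B) (a : MvPolynomial ι R) :
    E (θ a) = ∑ i, θ (pderiv i a) * E (θ (X i)) := by
  classical
  induction a using MvPolynomial.induction_on with
  | C c => simp [← algebraMap_eq]
  | add a b ha hb => simp only [map_add, ha, hb, add_mul, Finset.sum_add_distrib]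
  | mul_X a i ha =>
    simp only [map_mul, Derivation.leibniz, ha, smul_eq_mul, map_add, add_mul,
      Finset.sum_add_distrib, Finset.mul_sum, pderiv_X, mul_assoc]
    congr 1
    rw [Finset.sum_eq_single i (fun j _ hj => by simp [hj]) (by simp)]
    simp

variable [IsDomain R] [CharZero R] {e : ι → σ}

theorem pderiv_eq_zero_iff {f : MvPolynomial σ R} {i : σ} : pderiv i f = 0 ↔ i ∉ f.vars := by
  refine ⟨fun hf hi => ?_, pderiv_eq_zero_of_notMem_vars⟩
  obtain ⟨m, hm, hmi⟩ := (mem_vars_iff_mem_support i).mp hi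
  have hle : Finsupp.single i 1 ≤ m := by
    rw [Finsupp.single_le_iff]
    exact Nat.one_le_iff_ne_zero.mpr (Finsupp.mem_support_iff.mp hmi)
  have hcoeff := coeff_pderiv (i := i) f (m - Finsupp.single i 1)
  rw [hf, coeff_zero, tsub_add_cancel_of_le hle] at hcoeff
  exact mul_ne_zero (mem_support_iff.mp hm) (Nat.cast_add_one_ne_zero _) hcoeff.symm

theorem exists_pderiv_ne_zero {f : MvPolynomial σ R} (hf : 0 < f.totalDegree) :
    ∃ i, pderiv i f ≠ 0 := by
  by_contra! h
  have hvars : f.vars = ∅ := Finset.eq_empty_of_forall_notMem fun i => pderiv_eq_zero_iff.mp (h i)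
  rw [vars_eq_empty_iff_eq_C] at hvars
  rw [hvars, totalDegree_C] at hf
  exact hf.false

theorem mem_range_rename_iff (he : Function.Injective e) {f : MvPolynomial σ R} :
    f ∈ (rename (R := R) e).range ↔ ∀ j ∉ Set.range e, pderiv j f = 0 := by
  refine ⟨?_, fun h => ?_⟩
  · rintro ⟨a, rfl⟩ j hj
    refine pderiv_eq_zero_of_notMem_vars fun hmem => hj ?_
    obtain ⟨i, -, rfl⟩ := mem_vars_rename e a hmem
    exact ⟨i, rfl⟩
  · refine exists_rename_eq_of_vars_subset_range f e he fun j hj => ?_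
    by_contra hrange
    exact pderiv_eq_zero_iff.mp (h j hrange) hj

theorem mem_range_rename_of_dvd (he : Function.Injective e) {d : MvPolynomial σ R}
    {a : MvPolynomial ι R} (ha : a ≠ 0) (hd : d ∣ rename e a) : d ∈ (rename (R := R) e).range := by
  have hea : rename e a ≠ 0 := (map_ne_zero_iff _ (rename_injective e he)).mpr ha
  exact (mem_range_rename_iff he).mpr fun j hj => (isLocallyNilpotent_pderiv j).mem_kernel_of_dvd
    hd hea ((mem_range_rename_iff he).mp ⟨a, rfl⟩ j hj)

theorem isRelPrime_rename (he : Function.Injective e) {a b : MvPolynomial ι R}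
    (hab : IsRelPrime a b) : IsRelPrime (rename e a) (rename e b) := by
  intro d hda hdb
  have hd : d ∈ (rename (R := R) e).range := by
    rcases eq_or_ne a 0 with rfl | ha
    · rcases eq_or_ne b 0 with rfl | hb
      · exact absurd (hab dvd_rfl dvd_rfl) not_isUnit_zero
      · exact mem_range_rename_of_dvd he hb hdb
    · exact mem_range_rename_of_dvd he ha hda
  obtain ⟨c, rfl : rename e c = d⟩ := hd
  refine (hab ?_ ?_).map (rename e)
  · simpa only [killCompl_rename_app] using map_dvd (killCompl he) hda
  · simpa only [killCompl_rename_app] using map_dvd (killCompl he) hdb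

end PartialDerivative

section Jacobian

theorem exists_eq_mul_of_isRelPrime_of_add_eq_zero {B : Type*} [CommRing B] [IsDomain B]
    [DecompositionMonoid B] {a b u v : B} (hab : IsRelPrime a b) (h : a * u + b * v = 0) :
    ∃ k, u = k * b ∧ v = -(k * a) := by
  have hb : b ∣ u := hab.symm.dvd_of_dvd_mul_left ⟨-v, by linear_combination h⟩
  have ha : a ∣ v := hab.dvd_of_dvd_mul_left ⟨-u, by linear_combination h⟩
  obtain ⟨k, rfl⟩ := hb
  obtain ⟨l, rfl⟩ := ha
  have hsum : a * (b * (k + l)) = 0 := by linear_combination h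
  rcases mul_eq_zero.mp hsum with rfl | hbkl
  · exact ⟨k, mul_comm b k, by simp⟩
  rcases mul_eq_zero.mp hbkl with rfl | hkl
  · exact ⟨-l, by simp, by ring⟩
  · exact ⟨k, mul_comm b k, by linear_combination a * hkl⟩

variable {K : Type*} [Field K] [CharZero K]

theorem exists_isRelPrime_pderiv_eq_mul {p : MvPolynomial (Fin 2) K} (hp : 0 < p.totalDegree) :
    ∃ a b c, c ≠ 0 ∧ IsRelPrime a b ∧ pderiv 0 p = c * a ∧ pderiv 1 p = c * b := by
  obtain ⟨i, hi⟩ := exists_pderiv_ne_zero hp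
  fin_cases i
  · obtain ⟨b, a, c, hab, hb, ha⟩ :=
      UniqueFactorizationMonoid.exists_reduced_factors' (pderiv 1 p) (pderiv 0 p) hi
    exact ⟨a, b, c, left_ne_zero_of_mul (ha ▸ hi), hab.symm, ha.symm, hb.symm⟩
  · obtain ⟨a, b, c, hab, ha, hb⟩ :=
      UniqueFactorizationMonoid.exists_reduced_factors' (pderiv 0 p) (pderiv 1 p) hi
    exact ⟨a, b, c, left_ne_zero_of_mul (hb ▸ hi), hab, ha.symm, hb.symm⟩

theorem exists_isLocallyNilpotent_map_eq_zero {B : Type*} [CommRing B] [IsDomain B]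
    [DecompositionMonoid B] [CharZero B] [Algebra K B] {θ : MvPolynomial (Fin 2) K →ₐ[K] B}
    (hθ : Function.Injective θ) (hrel : ∀ a b, IsRelPrime a b → IsRelPrime (θ a) (θ b))
    {E : Derivation K B B} (hE : IsLocallyNilpotent E) (hEθ : ∃ a, E (θ a) ≠ 0)
    {p : MvPolynomial (Fin 2) K} (hp : 0 < p.totalDegree) (hEp : E (θ p) = 0) :
    ∃ D : Derivation K (MvPolynomial (Fin 2) K) (MvPolynomial (Fin 2) K),
      IsLocallyNilpotent D ∧ D ≠ 0 ∧ D p = 0 := by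
  obtain ⟨a, b, c, hc, hab, ha, hb⟩ := exists_isRelPrime_pderiv_eq_mul hp
  have hsyz : θ a * E (θ (X 0)) + θ b * E (θ (X 1)) = 0 := by
    refine mul_left_cancel₀ ((map_ne_zero_iff θ hθ).mpr hc) ?_
    rw [derivation_algHom_apply, Fin.sum_univ_two, ha, hb, map_mul, map_mul] at hEp
    linear_combination hEp
  obtain ⟨k, hX, hY⟩ := exists_eq_mul_of_isRelPrime_of_add_eq_zero (hrel a b hab) hsyz
  -- `D` is the Jacobian derivation of `p` divided by the gcd `c` of the partial derivatives;
  -- without this division `E ∘ θ` would only be a rational multiple of `θ ∘ D`.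
  let D : Derivation K (MvPolynomial (Fin 2) K) (MvPolynomial (Fin 2) K) :=
    b • pderiv 0 - a • pderiv 1
  have hD : ∀ f, D f = b * pderiv 0 f - a * pderiv 1 f := fun _ => rfl
  have hint : ∀ f, E (θ f) = k * θ (D f) := fun f => by
    rw [derivation_algHom_apply, Fin.sum_univ_two, hX, hY, hD, map_sub, map_mul, map_mul]
    ring
  obtain ⟨f, hf⟩ := hEθ
  rw [hint] at hf
  refine ⟨D, hE.of_intertwining (θ := θ.toRingHom) hθ (left_ne_zero_of_mul hf) hint, ?_, ?_⟩
  · intro h0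
    exact hf (by rw [h0, Derivation.zero_apply, map_zero, mul_zero])
  · rw [hD, ha, hb]
    ring

end Jacobian

section StableIsomorphism

variable {K ι σ τ : Type*} [Field K] {e : ι → σ} {e' : ι → τ}
  {φ : MvPolynomial σ K ≃ₐ[K] MvPolynomial τ K}

theorem eq_of_totalDegree_eq_zero (he' : Function.Injective e') {p q : MvPolynomial ι K}
    (hφ : φ (rename e p) = rename e' q) (hp : p.totalDegree = 0) : p = q := by
  rw [totalDegree_eq_zero_iff_eq_C] at hp
  rw [hp] at hφ ⊢
  refine rename_injective e' he' ?_
  rw [← hφ, rename_C, rename_C, ← algebraMap_eq, ← algebraMap_eq, AlgEquiv.commutes]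

theorem exists_algEquiv_of_forall_mem_range [Finite ι] (he : Function.Injective e)
    (hrange : ∀ a, φ (rename e a) ∈ (rename (R := K) e').range) {p q : MvPolynomial ι K}
    (hφ : φ (rename e p) = rename e' q) :
    ∃ α : MvPolynomial ι K ≃ₐ[K] MvPolynomial ι K, α p = q := by
  let β : MvPolynomial ι K →ₐ[K] MvPolynomial ι K :=
    (killCompl he).comp ((φ.symm : _ →ₐ[K] _).comp (rename e'))
  have hβ : ∀ {a b}, φ (rename e a) = rename e' b → β b = a := fun {a b} h => by
    change killCompl he (φ.symm (rename e' b)) = a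
    rw [← h, AlgEquiv.symm_apply_apply, killCompl_rename_app]
  have hsurj : Function.Surjective β := fun a => (hrange a).imp fun _ hb => hβ hb.symm
  refine ⟨(AlgEquiv.ofBijective β (bijective_of_surjective hsurj)).symm, ?_⟩
  rw [AlgEquiv.symm_apply_eq]
  exact (hβ hφ).symm

theorem natDegree_ne_zero_of_totalDegree_aeval_pos {v : MvPolynomial ι K} {f : Polynomial K}
    (hf : 0 < (Polynomial.aeval v f).totalDegree) : f.natDegree ≠ 0 := by
  intro h0
  rw [Polynomial.eq_C_of_natDegree_eq_zero h0, Polynomial.aeval_C, algebraMap_eq,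
    totalDegree_C] at hf
  exact hf.false

theorem exists_rename_eq_of_aeval [CharZero K] (he' : Function.Injective e')
    {v q : MvPolynomial ι K} {f : Polynomial K} (hf : f.natDegree ≠ 0)
    (hφ : φ (rename e (Polynomial.aeval v f)) = rename e' q) :
    ∃ a, rename e' a = φ (rename e v) ∧ Polynomial.aeval a f = q := by
  have hfv : Polynomial.aeval (φ (rename e v)) f = rename e' q := by
    rw [← hφ, Polynomial.aeval_algHom_apply, Polynomial.aeval_algHom_apply]
  obtain ⟨a, ha : rename e' a = φ (rename e v)⟩ : φ (rename e v) ∈ (rename (R := K) e').range :=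
    (mem_range_rename_iff he').mpr fun j hj => mem_kernel_of_aeval_mem_kernel hf <| by
      rw [hfv]
      exact (mem_range_rename_iff he').mp ⟨q, rfl⟩ j hj
  refine ⟨a, ha, rename_injective e' he' ?_⟩
  rw [← Polynomial.aeval_algHom_apply, ha, hfv]

variable [CharZero K] {e : Fin 2 → σ} {e' : Fin 2 → τ} {p q : MvPolynomial (Fin 2) K}

theorem exists_isCoordinate_of_not_forall_mem_range (he : Function.Injective e)
    (he' : Function.Injective e') (hφ : φ (rename e p) = rename e' q) (hp : 0 < p.totalDegree)
    (hrange : ¬ ∀ a, φ (rename e a) ∈ (rename (R := K) e').range) :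
    ∃ (D : Derivation K (MvPolynomial (Fin 2) K) (MvPolynomial (Fin 2) K))
      (v : MvPolynomial (Fin 2) K), IsCoordinate v ∧ kernel D = Algebra.adjoin K {v} ∧ D p = 0 := by
  push Not at hrange
  obtain ⟨a, ha⟩ := hrange
  rw [mem_range_rename_iff he'] at ha
  push Not at ha
  obtain ⟨j, hj, hja⟩ := ha
  let θ : MvPolynomial (Fin 2) K →ₐ[K] MvPolynomial τ K := (φ : _ →ₐ[K] _).comp (rename e)
  have hrel : ∀ a b, IsRelPrime a b → IsRelPrime (θ a) (θ b) := fun a b hab =>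
    .of_map φ.symm (by simpa [θ] using isRelPrime_rename he hab)
  have hθp : pderiv j (θ p) = 0 := by
    rw [show θ p = _ from hφ]
    exact (mem_range_rename_iff he').mp ⟨q, rfl⟩ j hj
  obtain ⟨D, hD, hD0, hDp⟩ := exists_isLocallyNilpotent_map_eq_zero
    (φ.injective.comp (rename_injective e he)) hrel (isLocallyNilpotent_pderiv j) ⟨a, hja⟩ hp hθp
  obtain ⟨v, hv, hker⟩ := hD.exists_isCoordinate_kernel_eq_adjoin hD0 hDp hp
  exact ⟨D, v, hv, hker, hDp⟩

theorem exists_algEquiv_of_mem_adjoin_isCoordinate (he : Function.Injective e)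
    (he' : Function.Injective e') (hφ : φ (rename e p) = rename e' q) (hp : 0 < p.totalDegree)
    (hq : 0 < q.totalDegree)
    {D : Derivation K (MvPolynomial (Fin 2) K) (MvPolynomial (Fin 2) K)}
    {v w : MvPolynomial (Fin 2) K} (hv : IsCoordinate v) (hker : kernel D = Algebra.adjoin K {v})
    (hDp : D p = 0) (hw : IsCoordinate w) (hqw : q ∈ Algebra.adjoin K {w}) :
    ∃ α : MvPolynomial (Fin 2) K ≃ₐ[K] MvPolynomial (Fin 2) K, α p = q := by
  have hpv : p ∈ Algebra.adjoin K {v} := hker ▸ hDp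
  rw [Algebra.adjoin_singleton_eq_range_aeval] at hpv hqw
  obtain ⟨f, rfl : Polynomial.aeval v f = p⟩ := hpv
  obtain ⟨g, rfl : Polynomial.aeval w g = q⟩ := hqw
  have hf := natDegree_ne_zero_of_totalDegree_aeval_pos hp
  have hg := natDegree_ne_zero_of_totalDegree_aeval_pos hq
  obtain ⟨a, ha, hfa⟩ := exists_rename_eq_of_aeval he' hf hφ
  obtain ⟨b, hb, hgb⟩ := exists_rename_eq_of_aeval (φ := φ.symm) he hg
    ((AlgEquiv.symm_apply_eq φ).mpr hφ.symm)
  have hbv : b ∈ Algebra.adjoin K {v} := by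
    rw [← hker]
    exact mem_kernel_of_aeval_mem_kernel hg (hgb ▸ hDp)
  rw [Algebra.adjoin_singleton_eq_range_aeval] at hbv
  obtain ⟨r, rfl : Polynomial.aeval v r = b⟩ := hbv
  have hwa : Polynomial.aeval a r = w := by
    refine rename_injective e' he' ?_
    rw [← Polynomial.aeval_algHom_apply, ha, Polynomial.aeval_algHom_apply,
      Polynomial.aeval_algHom_apply, hb, AlgEquiv.apply_symm_apply]
  have hacoord := hw.of_mem_adjoin (hwa ▸ Polynomial.aeval_mem_adjoin_singleton K a)
  obtain ⟨α, rfl⟩ := hv.exists_algEquiv hacoord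
  exact ⟨α, by rw [← hfa, Polynomial.aeval_algHom_apply]⟩

end StableIsomorphism

end StableEquivalence

open StableEquivalence in
theorem stable_equivalence_two_variables_general {K σ τ : Type*} [Field K] [CharZero K]
    {e : Fin 2 → σ} {e' : Fin 2 → τ} (he : Function.Injective e) (he' : Function.Injective e')
    (φ : MvPolynomial σ K ≃ₐ[K] MvPolynomial τ K) {p q : MvPolynomial (Fin 2) K}
    (hφ : φ (rename e p) = rename e' q) :
    ∃ α : MvPolynomial (Fin 2) K ≃ₐ[K] MvPolynomial (Fin 2) K, α p = q := by
  have hφ' : φ.symm (rename e' q) = rename e p := (AlgEquiv.symm_apply_eq φ).mpr hφ.symm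
  rcases p.totalDegree.eq_zero_or_pos with hp | hp
  · exact ⟨.refl, eq_of_totalDegree_eq_zero he' hφ hp⟩
  rcases q.totalDegree.eq_zero_or_pos with hq | hq
  · exact ⟨.refl, (eq_of_totalDegree_eq_zero he hφ' hq).symm⟩
  by_cases hrange : ∀ a, φ (rename e a) ∈ (rename (R := K) e').range
  · exact exists_algEquiv_of_forall_mem_range he hrange hφ
  by_cases hrange' : ∀ a, φ.symm (rename e' a) ∈ (rename (R := K) e).range
  · obtain ⟨α, rfl⟩ := exists_algEquiv_of_forall_mem_range he' hrange' hφ'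
    exact ⟨α.symm, α.symm_apply_apply q⟩
  obtain ⟨D, v, hv, hker, hDp⟩ := exists_isCoordinate_of_not_forall_mem_range he he' hφ hp hrange
  obtain ⟨E, w, hw, hker', hEq⟩ :=
    exists_isCoordinate_of_not_forall_mem_range he' he hφ' hq hrange'
  exact exists_algEquiv_of_mem_adjoin_isCoordinate he he' hφ hp hq hv hker hDp hw (hker' ▸ hEq)

/-- **Stable equivalence implies equivalence for two-variable polynomials.**
If `p, q ∈ K[x, y]` are stably equivalent (some `K`-algebra automorphism of
`K[x₁, …, xₘ]`, `m > 2`, maps the image of `p` under the natural inclusion to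
the image of `q`), then they are equivalent (some automorphism of `K[x, y]`
maps `p` to `q`). -/
theorem stable_equivalence_two_variables
    (K : Type*) [Field K] [CharZero K]
    (p q : MvPolynomial (Fin 2) K)
    (h : ∃ (m : ℕ) (hm : 2 < m)
        (φ : MvPolynomial (Fin m) K ≃ₐ[K] MvPolynomial (Fin m) K),
        φ (rename (Fin.castLE hm.le) p) = rename (Fin.castLE hm.le) q) :
    ∃ α : MvPolynomial (Fin 2) K ≃ₐ[K] MvPolynomial (Fin 2) K, α p = q := by
  obtain ⟨m, hm, φ, hφ⟩ := h
  have he := Fin.castLE_injective hm.le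
  exact stable_equivalence_two_variables_general he he φ hφ
end

section
/- Fix an integer n ≥ 1 and a field K of characteristic 0. Suppose the Stable coordinate conjecture holds for n, i.e., for every p ∈ K[x₁, …, xₙ], if there is a K-algebra automorphism φ of K[x₁, …, x_{n+1}] with φ(p) = x₁ (p viewed via the natural inclusion), then there is a K-algebra automorphism α of K[x₁, …, xₙ] with α(p) = x₁. Then the Cancellation conjecture holds for n: for every commutative K-algebra R, if the polynomial ring R[t] is isomorphic as a K-algebra to K[x₁, …, xₙ], then R is isomorphic as a K-algebra to K[x₁, …, x_{n−1}]. -/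
open MvPolynomial

/-!
Let `A = K[x₁, …, xₙ]` and `e : R[t] ≃ A`. Exchanging the two variables of `R[t][s]`, transported
along `e`, is an automorphism of `A[s]` carrying `e t` to `s`; hence `e t` is a coordinate of
`A[s]`. If it is already a coordinate of `A`, then `R[t]` is identified with
`K[x₂, …, xₙ][x₁]` in such a way that `t` corresponds to `x₁`, and setting both variables to zero
identifies `R` with `K[x₂, …, xₙ]`.
-/

section Polynomial

open scoped Polynomial

variable {K A B D : Type*} [CommSemiring K] [Semiring B] [Algebra K B]

theorem exists_algEquiv_C_apply_X_eq_X [CommSemiring A] [Algebra K A] (e : A[X] ≃ₐ[K] B) :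
    ∃ φ : B[X] ≃ₐ[K] B[X], φ (Polynomial.C (e Polynomial.X)) = Polynomial.X :=
  ⟨(Polynomial.mapAlgEquiv e.symm).trans
    ((Polynomial.Bivariate.swap.restrictScalars K).trans (Polynomial.mapAlgEquiv e)),
    by simp [Polynomial.Bivariate.swap_X]⟩

variable [Semiring A] [Algebra K A] [Semiring D] [Algebra K D]

/-- The homomorphism `A → B` induced by `f : A[X] → B[X]`: restrict `f` to the constants, then set
`X` to zero. -/
noncomputable def constantTermHom (f : A[X] →ₐ[K] B[X]) : A →ₐ[K] B where
  toRingHom := (Polynomial.constantCoeff.comp (f : A[X] →+* B[X])).comp Polynomial.C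
  commutes' r := by
    have hf : f (Polynomial.C (algebraMap K A r)) = Polynomial.C (algebraMap K B r) := f.commutes r
    simp [hf]

theorem constantTermHom_apply (f : A[X] →ₐ[K] B[X]) (a : A) :
    constantTermHom f a = (f (Polynomial.C a)).coeff 0 :=
  rfl

theorem constantTermHom_id : constantTermHom (AlgHom.id K A[X]) = AlgHom.id K A := by
  ext a
  simp [constantTermHom_apply]

theorem constantTermHom_coeff_zero {f : A[X] →ₐ[K] B[X]} (hf : f Polynomial.X = Polynomial.X)
    (p : A[X]) : constantTermHom f (p.coeff 0) = (f p).coeff 0 := by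
  conv_rhs => rw [← Polynomial.divX_mul_X_add p]
  simp [constantTermHom_apply, hf]

theorem constantTermHom_comp {g : B[X] →ₐ[K] D[X]}
    (hg : g Polynomial.X = Polynomial.X) (f : A[X] →ₐ[K] B[X]) :
    constantTermHom (g.comp f) = (constantTermHom g).comp (constantTermHom f) := by
  ext a
  simp only [AlgHom.comp_apply, constantTermHom_apply f, constantTermHom_coeff_zero hg,
    constantTermHom_apply (g.comp f)]

theorem nonempty_algEquiv_of_apply_X_eq_X (e : A[X] ≃ₐ[K] B[X])
    (he : e Polynomial.X = Polynomial.X) : Nonempty (A ≃ₐ[K] B) := by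
  have he_symm : e.symm Polynomial.X = Polynomial.X := by rw [AlgEquiv.symm_apply_eq, he]
  refine ⟨AlgEquiv.ofAlgHom (constantTermHom e) (constantTermHom e.symm) ?_ ?_⟩
  · rw [← constantTermHom_comp he, AlgEquiv.comp_symm, constantTermHom_id]
  · rw [← constantTermHom_comp he_symm, AlgEquiv.symm_comp, constantTermHom_id]

end Polynomial

section Coordinate

variable {K : Type*} [CommSemiring K] {n : ℕ}

/-- `p` is a coordinate of `K[x₁, …, xₙ₊₁]`: some automorphism carries it to the first variable,
which is `X 0` as variables are indexed by `Fin (n + 1)`. -/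
def IsCoordinate (p : MvPolynomial (Fin (n + 1)) K) : Prop :=
  ∃ α : MvPolynomial (Fin (n + 1)) K ≃ₐ[K] MvPolynomial (Fin (n + 1)) K, α p = X 0

theorem finSuccEquiv_rename_succ (p : MvPolynomial (Fin n) K) :
    finSuccEquiv K n (rename Fin.succ p) = Polynomial.C p := by
  suffices (finSuccEquiv K n).toAlgHom.comp (rename Fin.succ) = Polynomial.CAlgHom from
    DFunLike.congr_fun this p
  ext1 i
  simp [finSuccEquiv_X_succ]

theorem rename_finRotate_rename_castSucc (p : MvPolynomial (Fin n) K) :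
    rename (finRotate (n + 1)) (rename Fin.castSucc p) = rename Fin.succ p := by
  rw [rename_rename]
  congr 2
  ext1 i
  simp

variable {R : Type*} [CommSemiring R] [Algebra K R]

theorem isCoordinate_rename_castSucc_apply_X (e : Polynomial R ≃ₐ[K] MvPolynomial (Fin n) K) :
    IsCoordinate (rename Fin.castSucc (e Polynomial.X)) := by
  obtain ⟨φ, hφ⟩ := exists_algEquiv_C_apply_X_eq_X e
  refine ⟨(renameEquiv K (finRotate (n + 1))).trans
    ((finSuccEquiv K n).trans (φ.trans (finSuccEquiv K n).symm)), ?_⟩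
  simp only [AlgEquiv.trans_apply, renameEquiv_apply, rename_finRotate_rename_castSucc,
    finSuccEquiv_rename_succ, hφ]
  rw [AlgEquiv.symm_apply_eq, finSuccEquiv_X_zero]

theorem nonempty_algEquiv_of_isCoordinate_apply_X
    (e : Polynomial R ≃ₐ[K] MvPolynomial (Fin (n + 1)) K) (he : IsCoordinate (e Polynomial.X)) :
    Nonempty (R ≃ₐ[K] MvPolynomial (Fin n) K) := by
  obtain ⟨α, hα⟩ := he
  refine nonempty_algEquiv_of_apply_X_eq_X ((e.trans α).trans (finSuccEquiv K n)) ?_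
  rw [AlgEquiv.trans_apply, AlgEquiv.trans_apply, hα, finSuccEquiv_X_zero]

theorem stable_coordinate_implies_cancellation_general
    (stable_coordinate : ∀ p : MvPolynomial (Fin (n + 1)) K,
      IsCoordinate (rename Fin.castSucc p) → IsCoordinate p)
    (e : Polynomial R ≃ₐ[K] MvPolynomial (Fin (n + 1)) K) :
    Nonempty (R ≃ₐ[K] MvPolynomial (Fin n) K) :=
  nonempty_algEquiv_of_isCoordinate_apply_X e
    (stable_coordinate _ (isCoordinate_rename_castSucc_apply_X e))

end Coordinate

/-- **The Stable coordinate conjecture implies the Cancellation conjecture.**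
Fix `n ≥ 1` and a field `K` of characteristic 0.  If every `p ∈ K[x₁, …, xₙ]`
which becomes a coordinate of `K[x₁, …, x_{n+1}]` is already a coordinate of
`K[x₁, …, xₙ]`, then for every commutative `K`-algebra `R`, `R[t] ≅ K[x₁, …, xₙ]`
implies `R ≅ K[x₁, …, x_{n−1}]`. -/
theorem stable_coordinate_implies_cancellation
    (K : Type) [Field K] [CharZero K] (n : ℕ) (hn : 1 ≤ n)
    (SCC : ∀ p : MvPolynomial (Fin n) K,
      (∃ φ : MvPolynomial (Fin (n + 1)) K ≃ₐ[K] MvPolynomial (Fin (n + 1)) K,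
        φ (rename Fin.castSucc p) = X 0) →
      ∃ α : MvPolynomial (Fin n) K ≃ₐ[K] MvPolynomial (Fin n) K, α p = X ⟨0, hn⟩) :
    ∀ (R : Type) [CommRing R] [Algebra K R],
      Nonempty (Polynomial R ≃ₐ[K] MvPolynomial (Fin n) K) →
      Nonempty (R ≃ₐ[K] MvPolynomial (Fin (n - 1)) K) := by
  obtain ⟨m, rfl⟩ := Nat.exists_eq_add_of_le' hn
  exact fun R _ _ ⟨e⟩ ↦ stable_coordinate_implies_cancellation_general SCC e
end

section
/- Let K be a field of characteristic 0 and let R = K[x₁, …, xₙ, z] be a polynomial ring in n + 1 variables. Let (u, v) be a z-reduced pair of algebraically independent polynomials in R such that both u and v have positive degree in z. Then for any nonconstant two-variable polynomial p ∈ K[X, Y], the polynomial p(u, v) also has positive degree in z. -/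
open MvPolynomial

/-- A pair `(u, v)` of polynomials is `z`-reduced (where `z` is a distinguished
variable) if the sum of the degrees in `z` cannot be decreased by an invertible
linear transformation `(u, v) ↦ (au + bv, cu + dv)` (`ad − bc ≠ 0`), nor by an
elementary transformation `(u, v) ↦ (u + μ·vᵏ, v)` or `(u, v) ↦ (u, v + μ·uᵏ)`
with `μ ≠ 0`, `k ≥ 2`. -/
def IsZReduced {K : Type*} [CommRing K] {σ : Type*} [DecidableEq σ]
    (z : σ) (u v : MvPolynomial σ K) : Prop :=
  (∀ a b c d : K, a * d - b * c ≠ 0 →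
    degreeOf z u + degreeOf z v ≤
      degreeOf z (C a * u + C b * v) + degreeOf z (C c * u + C d * v)) ∧
  (∀ μ : K, μ ≠ 0 → ∀ k : ℕ, 2 ≤ k →
    degreeOf z u + degreeOf z v ≤ degreeOf z (u + C μ * v ^ k) + degreeOf z v) ∧
  (∀ μ : K, μ ≠ 0 → ∀ k : ℕ, 2 ≤ k →
    degreeOf z u + degreeOf z v ≤ degreeOf z u + degreeOf z (v + C μ * u ^ k))

/-!
Suppose that `p(u, v)` is free of `z` but not constant. Then the Jacobian `J(u, v)` with respect to
`z` and some other variable is nonzero. Since `(∂q/∂Y)(u, v) · J(u, v) = J(u, q(u, v))`, the Euler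
operator `Y ∂/∂Y` raises the `z`-degree of `q(u, v)` by at most `deg u + deg v - 1`. If the leading
form of `p`, for the weights `deg u` and `deg v`, has `t + 1` terms, then a polynomial of degree `t`
in the Euler operator isolates one of them, so the weight of `p` is at most
`t (deg u + deg v - 1)`. It is also at least `t · lcm (deg u, deg v)`, because exponents of `Y` in
the leading form are congruent modulo `lcm (deg u, deg v) / deg v`. Hence
`lcm (deg u, deg v) < deg u + deg v`, and one of the degrees divides the other, say
`deg v = k · deg u`.

Now the leading form of `p` vanishes at the leading coefficients of `u` and `v` in `z`, so
`lc v / (lc u)ᵏ` is algebraic over `K`, hence a constant `s`. Therefore `v - s uᵏ` has smaller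
degree than `v`, contradicting reducedness.
-/

section TotalDegree

variable {R σ ι : Type*} [CommSemiring R]

theorem exists_degreeOf_pos_of_totalDegree_pos {f : MvPolynomial σ R} (hf : 0 < f.totalDegree) :
    ∃ i, 0 < degreeOf i f := by
  by_contra! h
  refine hf.ne' ((totalDegree_eq_zero_iff _ _).2 fun d hd i => ?_)
  exact Nat.le_zero.1 ((monomial_le_degreeOf i hd).trans (h i))

theorem totalDegree_pos_of_totalDegree_aeval_pos {f : ι → MvPolynomial σ R}
    {p : MvPolynomial ι R} (h : 0 < (aeval f p).totalDegree) :
    0 < p.totalDegree := by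
  contrapose! h
  rw [totalDegree_eq_zero_iff_eq_C.1 (Nat.le_zero.1 h), aeval_C, algebraMap_eq, totalDegree_C]

theorem totalDegree_aeval_pos_of_algebraicIndependent {R : Type*} [CommRing R]
    {f : ι → MvPolynomial σ R} (hf : AlgebraicIndependent R f) {p : MvPolynomial ι R}
    (hp : 0 < p.totalDegree) : 0 < (aeval f p).totalDegree := by
  contrapose! hp
  have hconst := totalDegree_eq_zero_iff_eq_C.1 (Nat.le_zero.1 hp)
  rw [← algebraMap_eq, ← aeval_C f] at hconst
  rw [hf hconst, totalDegree_C]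

theorem weightedTotalDegree_pos_of_totalDegree_pos {w : ι → ℕ} (hw : ∀ i, w i ≠ 0)
    {p : MvPolynomial ι R} (hp : 0 < p.totalDegree) : 0 < weightedTotalDegree w p := by
  contrapose! hp
  have hzero := (weightedTotalDegree_eq_zero_iff (nonTorsionWeight_of hw) p).1 (Nat.le_zero.1 hp)
  exact ((totalDegree_eq_zero_iff _ p).2 hzero).le

end TotalDegree

section Derivations

theorem derivation_aeval_eq_sum {R A M ι : Type*} [CommSemiring R] [CommSemiring A]
    [AddCommMonoid M] [Algebra R A] [Module A M] [Module R M] [Fintype ι]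
    (D : Derivation R A M) (f : ι → A) (q : MvPolynomial ι R) :
    D (aeval f q) = ∑ i, aeval f (pderiv i q) • D (f i) := by
  classical
  induction q using MvPolynomial.induction_on with
  | C a => simp
  | add p q hp hq => simp only [map_add, hp, hq, add_smul, Finset.sum_add_distrib]
  | mul_X p j hp =>
    simp only [map_mul, map_add, aeval_X, Derivation.leibniz, hp, pderiv_X, smul_eq_mul, add_smul,
      Finset.sum_add_distrib, Finset.smul_sum, mul_smul]
    congr 1
    rw [Finset.sum_eq_single_of_mem j (Finset.mem_univ j) fun i _ hij => by simp [hij.symm]]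
    simp

variable {R σ : Type*} [CommSemiring R]

theorem degreeOf_pderiv_le (z i : σ) (f : MvPolynomial σ R) :
    degreeOf z (pderiv i f) ≤ degreeOf z f := by
  refine degreeOf_le_iff.2 fun d hd => ?_
  rw [mem_support_iff, coeff_pderiv] at hd
  have h := monomial_le_degreeOf z (mem_support_iff.2 (left_ne_zero_of_mul hd))
  exact le_self_add.trans h

theorem degreeOf_pderiv_self_le (z : σ) (f : MvPolynomial σ R) :
    degreeOf z (pderiv z f) ≤ degreeOf z f - 1 := by
  refine degreeOf_le_iff.2 fun d hd => ?_
  rw [mem_support_iff, coeff_pderiv] at hd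
  have h := monomial_le_degreeOf z (mem_support_iff.2 (left_ne_zero_of_mul hd))
  rw [Finsupp.add_apply, Finsupp.single_eq_same] at h
  exact Nat.le_sub_one_of_lt h

theorem pderiv_eq_zero_of_degreeOf_eq_zero {z : σ} {f : MvPolynomial σ R}
    (h : degreeOf z f = 0) : pderiv z f = 0 :=
  pderiv_eq_zero_of_notMem_vars fun hz => mem_vars_iff_degreeOf_ne_zero.1 hz h

theorem pderiv_ne_zero_of_degreeOf_pos [NoZeroDivisors R] [CharZero R] {z : σ}
    {f : MvPolynomial σ R} (h : 0 < degreeOf z f) : pderiv z f ≠ 0 := by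
  intro h0
  refine h.not_ge (degreeOf_le_iff.2 fun d hd => ?_)
  by_contra! hdz
  have hcoeff := coeff_pderiv (i := z) f (d - Finsupp.single z 1)
  rw [h0, coeff_zero, Finsupp.sub_add_single_one_cancel hdz.ne'] at hcoeff
  exact mul_ne_zero (mem_support_iff.1 hd) (Nat.cast_add_one_ne_zero _) hcoeff.symm

theorem degreeOf_mul_pderiv_self_le (z : σ) (f g : MvPolynomial σ R) :
    degreeOf z (f * pderiv z g) ≤ degreeOf z f + degreeOf z g - 1 := by
  obtain hz | hz := Nat.eq_zero_or_pos (degreeOf z g)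
  · simp [pderiv_eq_zero_of_degreeOf_eq_zero hz]
  · have hmul := degreeOf_mul_le z f (pderiv z g)
    have hderiv := degreeOf_pderiv_self_le z g
    omega

end Derivations

section Jacobian

variable {R σ : Type*} [CommRing R]

/-- The Jacobian determinant of the pair `(f, g)` with respect to the variables `i` and `j`. -/
noncomputable def jacobianMinor (i j : σ) (f g : MvPolynomial σ R) : MvPolynomial σ R :=
  pderiv i f * pderiv j g - pderiv j f * pderiv i g

theorem jacobianMinor_aeval_right (i j : σ) (u v : MvPolynomial σ R) (q : MvPolynomial (Fin 2) R) :
    jacobianMinor i j u (aeval ![u, v] q) =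
      aeval ![u, v] (pderiv 1 q) * jacobianMinor i j u v := by
  simp only [jacobianMinor, derivation_aeval_eq_sum, Fin.sum_univ_two, smul_eq_mul,
    Matrix.cons_val_zero, Matrix.cons_val_one]
  ring

theorem degreeOf_jacobianMinor_le (i z : σ) (f g : MvPolynomial σ R) :
    degreeOf z (jacobianMinor i z f g) ≤ degreeOf z f + degreeOf z g - 1 := by
  have hf := degreeOf_pderiv_le z i f
  have hg := degreeOf_pderiv_le z i g
  have hfg := degreeOf_mul_pderiv_self_le z (pderiv i f) g
  have hgf := degreeOf_mul_pderiv_self_le z (pderiv i g) f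
  rw [jacobianMinor, mul_comm (pderiv z f)]
  exact (degreeOf_sub_le z _ _).trans (max_le (by omega) (by omega))

theorem exists_jacobianMinor_ne_zero [NoZeroDivisors R] [CharZero R] {z : σ}
    {f g : MvPolynomial σ R} (hf : 0 < degreeOf z f) (hg : 0 < g.totalDegree)
    (hgz : degreeOf z g = 0) : ∃ i, jacobianMinor i z f g ≠ 0 := by
  obtain ⟨i, hi⟩ := exists_degreeOf_pos_of_totalDegree_pos hg
  refine ⟨i, ?_⟩
  rw [jacobianMinor, pderiv_eq_zero_of_degreeOf_eq_zero hgz, mul_zero, zero_sub, neg_ne_zero]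
  exact mul_ne_zero (pderiv_ne_zero_of_degreeOf_pos hf) (pderiv_ne_zero_of_degreeOf_pos hi)

theorem exists_jacobianMinor_ne_zero_of_aeval [NoZeroDivisors R] [CharZero R] {z : σ}
    {u v : MvPolynomial σ R} {p : MvPolynomial (Fin 2) R} (hu : 0 < degreeOf z u)
    (hp : 0 < (aeval ![u, v] p).totalDegree) (hz : degreeOf z (aeval ![u, v] p) = 0) :
    ∃ i, jacobianMinor i z u v ≠ 0 := by
  obtain ⟨i, hi⟩ := exists_jacobianMinor_ne_zero hu hp hz
  rw [jacobianMinor_aeval_right] at hi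
  exact ⟨i, right_ne_zero_of_mul hi⟩

theorem degreeOf_aeval_pderiv_one_le [NoZeroDivisors R] {i z : σ} {u v : MvPolynomial σ R}
    (huv : jacobianMinor i z u v ≠ 0) (q : MvPolynomial (Fin 2) R) :
    degreeOf z (aeval ![u, v] (pderiv 1 q)) ≤
      degreeOf z (aeval ![u, v] q) + degreeOf z u - 1 := by
  by_cases hq : aeval ![u, v] (pderiv 1 q) = 0
  · rw [hq, degreeOf_zero]
    exact Nat.zero_le _
  calc degreeOf z (aeval ![u, v] (pderiv 1 q))
      ≤ degreeOf z (aeval ![u, v] (pderiv 1 q)) + degreeOf z (jacobianMinor i z u v) :=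
        le_self_add
    _ = degreeOf z (jacobianMinor i z u (aeval ![u, v] q)) := by
        rw [jacobianMinor_aeval_right, degreeOf_mul_eq hq huv]
    _ ≤ degreeOf z (aeval ![u, v] q) + degreeOf z u - 1 := by
        rw [add_comm (degreeOf z (aeval ![u, v] q))]
        exact degreeOf_jacobianMinor_le i z u _

end Jacobian

section EulerOperator

variable {R ι : Type*} [CommSemiring R]

variable (R) in
/-- The Euler operator `q ↦ Xᵢ · ∂q/∂Xᵢ`, diagonal in the basis of monomials. -/
noncomputable def eulerOperator (i : ι) : Module.End R (MvPolynomial ι R) :=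
  LinearMap.mulLeft R (X i) ∘ₗ (pderiv i).toLinearMap

theorem eulerOperator_apply (i : ι) (q : MvPolynomial ι R) :
    eulerOperator R i q = X i * pderiv i q := rfl

theorem coeff_eulerOperator (i : ι) (q : MvPolynomial ι R) (d : ι →₀ ℕ) :
    coeff d (eulerOperator R i q) = d i * coeff d q := by
  classical
  rw [eulerOperator_apply]
  induction q using MvPolynomial.induction_on' with
  | add p q hp hq => simp only [map_add, mul_add, coeff_add, hp, hq]
  | monomial m r =>
    rw [X_mul_pderiv_monomial, coeff_smul, nsmul_eq_mul, coeff_monomial]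
    split_ifs with h <;> simp [h]

theorem coeff_aeval_eulerOperator (i : ι) (P : Polynomial R) (q : MvPolynomial ι R)
    (d : ι →₀ ℕ) :
    coeff d (Polynomial.aeval (eulerOperator R i) P q) = P.eval (d i : R) * coeff d q := by
  have hpow (k : ℕ) : coeff d ((eulerOperator R i ^ k) q) = (d i : R) ^ k * coeff d q := by
    induction k with
    | zero => simp
    | succ k ih =>
      rw [pow_succ', Module.End.mul_apply, coeff_eulerOperator, ih, pow_succ', mul_assoc]
  simp only [Polynomial.aeval_eq_sum_range, Polynomial.eval_eq_sum_range, LinearMap.sum_apply,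
    LinearMap.smul_apply, coeff_sum, coeff_smul, hpow, Finset.sum_mul, smul_eq_mul, mul_assoc]

theorem degreeOf_aeval_aeval_eulerOperator_le {σ : Type*} {z : σ} {f : ι → MvPolynomial σ R}
    {i : ι} {c : ℕ} (hc : ∀ q, degreeOf z (aeval f (eulerOperator R i q)) ≤
      degreeOf z (aeval f q) + c) (P : Polynomial R) (q : MvPolynomial ι R) :
    degreeOf z (aeval f (Polynomial.aeval (eulerOperator R i) P q)) ≤
      degreeOf z (aeval f q) + P.natDegree * c := by
  have hpow (k : ℕ) : degreeOf z (aeval f ((eulerOperator R i ^ k) q)) ≤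
      degreeOf z (aeval f q) + k * c := by
    induction k with
    | zero => simp
    | succ k ih =>
      rw [pow_succ', Module.End.mul_apply, Nat.succ_mul, ← add_assoc]
      exact (hc _).trans (Nat.add_le_add_right ih c)
  rw [Polynomial.aeval_eq_sum_range, LinearMap.sum_apply, map_sum]
  refine (degreeOf_sum_le z _ _).trans (Finset.sup_le fun k hk => ?_)
  rw [LinearMap.smul_apply, map_smul, smul_eq_C_mul]
  refine (degreeOf_C_mul_le _ z _).trans ((hpow k).trans ?_)
  gcongr
  exact Nat.lt_succ_iff.1 (Finset.mem_range.1 hk)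

theorem degreeOf_aeval_eulerOperator_one_le {R σ : Type*} [CommRing R] [NoZeroDivisors R]
    {i z : σ} {u v : MvPolynomial σ R} (hu : 0 < degreeOf z u)
    (huv : jacobianMinor i z u v ≠ 0) (q : MvPolynomial (Fin 2) R) :
    degreeOf z (aeval ![u, v] (eulerOperator R 1 q)) ≤
      degreeOf z (aeval ![u, v] q) + (degreeOf z u + degreeOf z v - 1) := by
  have hmul := degreeOf_mul_le z v (aeval ![u, v] (pderiv 1 q))
  have hderiv := degreeOf_aeval_pderiv_one_le huv q
  rw [eulerOperator_apply, map_mul, aeval_X, Matrix.cons_val_one]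
  simp only [Matrix.cons_val_fin_one]
  omega

end EulerOperator

section LeadingCoeff

section Univariate

open Polynomial

theorem coeff_prod_sum_of_natDegree_le {ι A : Type*} [CommSemiring A] (s : Finset ι) (f : ι → A[X])
    (n : ι → ℕ) (h : ∀ i ∈ s, (f i).natDegree ≤ n i) :
    (∏ i ∈ s, f i).coeff (∑ i ∈ s, n i) = ∏ i ∈ s, (f i).coeff (n i) := by
  classical
  induction s using Finset.induction_on with
  | empty => simp
  | insert a s ha ih =>
    have hs : ∀ i ∈ s, (f i).natDegree ≤ n i := fun i hi => h i (Finset.mem_insert_of_mem hi)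
    rw [Finset.prod_insert ha, Finset.sum_insert ha, Finset.prod_insert ha,
      coeff_mul_add_eq_of_natDegree_le (h a (Finset.mem_insert_self a s)), ih hs]
    exact (natDegree_prod_le s f).trans (Finset.sum_le_sum hs)

variable {R A ι : Type*} [CommSemiring R] [CommSemiring A] [Algebra R A]

theorem coeff_finsuppProd_pow_of_weight_le (f : ι → A[X]) {d : ι →₀ ℕ} {n : ℕ}
    (hd : Finsupp.weight (fun i => (f i).natDegree) d ≤ n) :
    (d.prod fun i k => f i ^ k).coeff n =
      if Finsupp.weight (fun i => (f i).natDegree) d = n then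
        d.prod fun i k => (f i).leadingCoeff ^ k else 0 := by
  rw [Finsupp.weight_apply] at hd ⊢
  simp only [Finsupp.sum, Finsupp.prod, smul_eq_mul] at hd ⊢
  have hpow : ∀ i ∈ d.support, (f i ^ d i).natDegree ≤ d i * (f i).natDegree :=
    fun _ _ => natDegree_pow_le
  split_ifs with h
  · rw [← h, coeff_prod_sum_of_natDegree_le _ _ _ hpow]
    exact Finset.prod_congr rfl fun i _ => coeff_pow_of_natDegree_le le_rfl
  · refine coeff_eq_zero_of_natDegree_lt (lt_of_le_of_lt ?_ (lt_of_le_of_ne hd h))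
    exact (natDegree_prod_le _ _).trans (Finset.sum_le_sum hpow)

theorem coeff_aeval_eq_aeval_leadingCoeff (f : ι → A[X]) {q : MvPolynomial ι R} {n : ℕ}
    (hq : ∀ d ∈ q.support, Finsupp.weight (fun i => (f i).natDegree) d ≤ n) :
    (MvPolynomial.aeval f q).coeff n = MvPolynomial.aeval (fun i => (f i).leadingCoeff)
      (weightedHomogeneousComponent (fun i => (f i).natDegree) n q) := by
  rw [weightedHomogeneousComponent_apply, Finset.sum_filter]
  conv_lhs => rw [q.as_sum]
  simp only [map_sum, finsetSum_coeff]
  refine Finset.sum_congr rfl fun d hd => ?_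
  rw [MvPolynomial.aeval_monomial, Polynomial.algebraMap_apply, Polynomial.coeff_C_mul,
    coeff_finsuppProd_pow_of_weight_le f (hq d hd)]
  split_ifs
  · rw [MvPolynomial.aeval_monomial]
  · rw [mul_zero, map_zero]

end Univariate

variable {R σ ι : Type*} [CommSemiring R] [DecidableEq σ]

/-- The isomorphism `R[σ] ≃ R[σ ∖ {z}][z]` singling out the variable `z`. -/
noncomputable def isolateVar (z : σ) :
    MvPolynomial σ R ≃ₐ[R] Polynomial (MvPolynomial {i // i ≠ z} R) :=
  (renameEquiv R (Equiv.optionSubtypeNe z).symm).trans (optionEquivLeft R {i // i ≠ z})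

theorem natDegree_isolateVar (z : σ) (f : MvPolynomial σ R) :
    (isolateVar z f).natDegree = degreeOf z f :=
  (degreeOf_eq_natDegree z f).symm

/-- The leading coefficient of `f` as a polynomial in `z` over the remaining variables. -/
noncomputable def leadingCoeffOf (z : σ) (f : MvPolynomial σ R) : MvPolynomial {i // i ≠ z} R :=
  (isolateVar z f).leadingCoeff

theorem leadingCoeffOf_ne_zero {z : σ} {f : MvPolynomial σ R} (hf : f ≠ 0) :
    leadingCoeffOf z f ≠ 0 :=
  Polynomial.leadingCoeff_ne_zero.2 ((map_ne_zero_iff _ (isolateVar z).injective).2 hf)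

theorem coeff_isolateVar_aeval (z : σ) (f : ι → MvPolynomial σ R) {q : MvPolynomial ι R} {n : ℕ}
    (hq : ∀ d ∈ q.support, Finsupp.weight (fun i => degreeOf z (f i)) d ≤ n) :
    (isolateVar z (aeval f q)).coeff n = aeval (fun i => leadingCoeffOf z (f i))
      (weightedHomogeneousComponent (fun i => degreeOf z (f i)) n q) := by
  simp only [leadingCoeffOf, ← natDegree_isolateVar] at hq ⊢
  rw [← coeff_aeval_eq_aeval_leadingCoeff _ hq]
  exact congrArg (Polynomial.coeff · n) (comp_aeval_apply f (isolateVar z).toAlgHom q)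

theorem le_degreeOf_of_coeff_isolateVar_ne_zero {z : σ} {f : MvPolynomial σ R} {n : ℕ}
    (h : (isolateVar z f).coeff n ≠ 0) : n ≤ degreeOf z f :=
  natDegree_isolateVar z f ▸ Polynomial.le_natDegree_of_ne_zero h

end LeadingCoeff

section LeadingForm

/-- The leading form of `p` for the grading in which `X i` has weight `w i`, i.e. the sum of
the terms of `p` of largest weight. -/
noncomputable def leadingForm {R ι : Type*} [CommSemiring R] (w : ι → ℕ) (p : MvPolynomial ι R) :
    MvPolynomial ι R :=
  weightedHomogeneousComponent w (weightedTotalDegree w p) p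

section Basic

variable {R ι : Type*} [CommSemiring R]

theorem isWeightedHomogeneous_leadingForm (w : ι → ℕ) (p : MvPolynomial ι R) :
    IsWeightedHomogeneous w (leadingForm w p) (weightedTotalDegree w p) :=
  weightedHomogeneousComponent_isWeightedHomogeneous _ p

theorem leadingForm_ne_zero (w : ι → ℕ) {p : MvPolynomial ι R} (hp : p ≠ 0) :
    leadingForm w p ≠ 0 := by
  obtain ⟨d, hd, hdw⟩ := Finset.exists_mem_eq_sup p.support (support_nonempty.2 hp)
    (fun d => Finsupp.weight w d)
  replace hdw : Finsupp.weight w d = weightedTotalDegree w p := hdw.symm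
  refine ne_zero_iff.2 ⟨d, ?_⟩
  rw [leadingForm, coeff_weightedHomogeneousComponent, if_pos hdw]
  exact mem_support_iff.1 hd

theorem aeval_leadingForm_eq_zero {σ : Type*} [DecidableEq σ] {z : σ}
    {f : ι → MvPolynomial σ R} {p : MvPolynomial ι R}
    (h : degreeOf z (aeval f p) < weightedTotalDegree (fun i => degreeOf z (f i)) p) :
    aeval (fun i => leadingCoeffOf z (f i)) (leadingForm (fun i => degreeOf z (f i)) p) = 0 := by
  rw [leadingForm, ← coeff_isolateVar_aeval z f fun d hd => le_weightedTotalDegree _ hd]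
  by_contra hne
  exact h.not_ge (le_degreeOf_of_coeff_isolateVar_ne_zero hne)

end Basic

variable {R ι : Type*} [CommRing R] [IsDomain R] [CharZero R]

/- A polynomial in the Euler operator with roots at all but one of the exponents that occur in the
leading form reduces that form to a single monomial, which cannot cancel under substitution. -/
theorem exists_weightedHomogeneousComponent_aeval_eulerOperator_eq_monomial (w : ι → ℕ)
    {p : MvPolynomial ι R} (hp : p ≠ 0) {i : ι}
    (hinj : Set.InjOn (fun d : ι →₀ ℕ => d i) (leadingForm w p).support) :
    ∃ P : Polynomial R, P.natDegree = (leadingForm w p).support.card - 1 ∧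
      ∃ (d : ι →₀ ℕ) (a : R), a ≠ 0 ∧
        weightedHomogeneousComponent w (weightedTotalDegree w p)
          (Polynomial.aeval (eulerOperator R i) P p) = monomial d a := by
  classical
  obtain ⟨d₀, hd₀⟩ := support_nonempty.2 (leadingForm_ne_zero w hp)
  set S := (leadingForm w p).support
  set P := Lagrange.nodal (S.erase d₀) fun d => (d i : R)
  have hPd₀ : P.eval (d₀ i : R) ≠ 0 := by
    refine Lagrange.eval_nodal_not_at_node fun d hd => ?_
    obtain ⟨hne, hdS⟩ := Finset.mem_erase.1 hd
    exact Nat.cast_injective.ne fun h => hne (hinj hdS hd₀ h.symm)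
  have hcoeff (d : ι →₀ ℕ) : coeff d (weightedHomogeneousComponent w (weightedTotalDegree w p)
      (Polynomial.aeval (eulerOperator R i) P p)) =
        P.eval (d i : R) * coeff d (leadingForm w p) := by
    rw [leadingForm, coeff_weightedHomogeneousComponent, coeff_weightedHomogeneousComponent,
      coeff_aeval_eulerOperator, mul_ite, mul_zero]
  refine ⟨P, by rw [Lagrange.natDegree_nodal, Finset.card_erase_of_mem hd₀], d₀,
    P.eval (d₀ i : R) * coeff d₀ (leadingForm w p), mul_ne_zero hPd₀ (mem_support_iff.1 hd₀), ?_⟩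
  ext d
  rw [hcoeff, coeff_monomial]
  split_ifs with hd
  · rw [hd]
  by_cases hdS : d ∈ S
  · have hPd : P.eval (d i : R) = 0 :=
      Lagrange.eval_nodal_at_node (v := fun d => (d i : R))
        (Finset.mem_erase.2 ⟨Ne.symm hd, hdS⟩)
    rw [hPd, zero_mul]
  · rw [notMem_support_iff.1 hdS, mul_zero]

theorem weightedTotalDegree_le_degreeOf_aeval_add {σ : Type*} {z : σ}
    {f : ι → MvPolynomial σ R} (hf : ∀ i, f i ≠ 0) {p : MvPolynomial ι R} (hp : p ≠ 0)
    {i : ι} {c : ℕ} (hc : ∀ q, degreeOf z (aeval f (eulerOperator R i q)) ≤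
      degreeOf z (aeval f q) + c)
    (hinj : Set.InjOn (fun d : ι →₀ ℕ => d i)
      (leadingForm (fun i => degreeOf z (f i)) p).support) :
    weightedTotalDegree (fun i => degreeOf z (f i)) p ≤ degreeOf z (aeval f p) +
      ((leadingForm (fun i => degreeOf z (f i)) p).support.card - 1) * c := by
  classical
  obtain ⟨P, hPdeg, d, a, ha, hcomp⟩ :=
    exists_weightedHomogeneousComponent_aeval_eulerOperator_eq_monomial _ hp hinj
  rw [← hPdeg]
  refine le_trans ?_ (degreeOf_aeval_aeval_eulerOperator_le hc P p)
  apply le_degreeOf_of_coeff_isolateVar_ne_zero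
  rw [coeff_isolateVar_aeval, hcomp, aeval_monomial]
  · refine mul_ne_zero ((map_ne_zero_iff _ (C_injective _ R)).2 ha) ?_
    exact Finset.prod_ne_zero_iff.2 fun j _ => pow_ne_zero _ (leadingCoeffOf_ne_zero (hf j))
  · intro d hd
    rw [mem_support_iff, coeff_aeval_eulerOperator] at hd
    exact le_weightedTotalDegree _ (mem_support_iff.2 (right_ne_zero_of_mul hd))

end LeadingForm

section BinaryForms

theorem weight_fin_two (w : Fin 2 → ℕ) (d : Fin 2 →₀ ℕ) :
    Finsupp.weight w d = d 0 * w 0 + d 1 * w 1 := by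
  simp [Finsupp.weight_apply, Finsupp.sum_fintype, Fin.sum_univ_two]

variable {R : Type*} [CommSemiring R] {w : Fin 2 → ℕ} {q : MvPolynomial (Fin 2) R} {n : ℕ}

theorem injOn_support_of_isWeightedHomogeneous (hw : w 0 ≠ 0) (hq : IsWeightedHomogeneous w q n) :
    Set.InjOn (fun d : Fin 2 →₀ ℕ => d 1) q.support := by
  intro d hd e he (hde : d 1 = e 1)
  have hweight := (hq (mem_support_iff.1 hd)).trans (hq (mem_support_iff.1 he)).symm
  rw [weight_fin_two, weight_fin_two, hde] at hweight
  ext i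
  fin_cases i
  · exact Nat.eq_of_mul_eq_mul_right (Nat.pos_of_ne_zero hw) (Nat.add_right_cancel hweight)
  · exact hde

theorem card_sub_one_mul_le_of_modEq {s : Finset ℕ} {m n : ℕ} (hn : ∀ a ∈ s, a ≤ n)
    (hmod : ∀ a ∈ s, ∀ b ∈ s, a ≡ b [MOD m]) : (s.card - 1) * m ≤ n := by
  have hcard : s.card ≤ (Finset.range (n / m + 1)).card := by
    refine Finset.card_le_card_of_injOn (· / m) (fun a ha => ?_) fun a ha b hb hab => ?_
    · simpa [Nat.lt_succ_iff] using Nat.div_le_div_right (hn a ha)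
    · rw [← Nat.div_add_mod a m, ← Nat.div_add_mod b m, hmod a ha b hb]
      exact congrArg (m * · + b % m) hab
  rw [Finset.card_range] at hcard
  exact (Nat.mul_le_mul_right m (Nat.sub_le_of_le_add hcard)).trans (Nat.div_mul_le_self n m)

theorem card_support_sub_one_mul_lcm_le (h0 : w 0 ≠ 0) (h1 : w 1 ≠ 0)
    (hq : IsWeightedHomogeneous w q n) : (q.support.card - 1) * (w 0).lcm (w 1) ≤ n := by
  have hweight : ∀ d ∈ q.support, d 0 * w 0 + d 1 * w 1 = n := fun d hd =>
    weight_fin_two w d ▸ hq (mem_support_iff.1 hd)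
  have hinj : Set.InjOn (fun d : Fin 2 →₀ ℕ => d 1 * w 1) q.support := fun d hd e he hde =>
    injOn_support_of_isWeightedHomogeneous h0 hq hd he
      (Nat.eq_of_mul_eq_mul_right (Nat.pos_of_ne_zero h1) hde)
  rw [← Finset.card_image_of_injOn hinj]
  apply card_sub_one_mul_le_of_modEq
  · exact Finset.forall_mem_image.2 fun d hd => (Nat.le_add_left _ _).trans (hweight d hd).le
  · refine Finset.forall_mem_image.2 fun d hd => Finset.forall_mem_image.2 fun e he => ?_
    apply Nat.mod_lcm
    · have h := (hweight d hd).trans (hweight e he).symm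
      simpa [Nat.ModEq] using congrArg (· % w 0) h
    · simp [Nat.ModEq]

theorem two_mul_le_lcm_of_not_dvd {a b : ℕ} (ha : a ≠ 0) (hab : ¬a ∣ b) : 2 * b ≤ a.lcm b := by
  obtain ⟨l, hl⟩ := Nat.dvd_lcm_right a b
  have hb : b ≠ 0 := fun h => hab (h ▸ dvd_zero a)
  have hl0 : l ≠ 0 := fun h => Nat.lcm_ne_zero ha hb (by rw [hl, h, mul_zero])
  have hl1 : l ≠ 1 := fun h => hab (by simpa [hl, h] using Nat.dvd_lcm_left a b)
  rw [hl, mul_comm]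
  exact Nat.mul_le_mul_left b (by omega)

theorem dvd_or_dvd_of_lcm_lt_add {a b : ℕ} (h : a.lcm b < a + b) : a ∣ b ∨ b ∣ a := by
  by_contra! ⟨hab, hba⟩
  have ha : a ≠ 0 := fun h => hba (h ▸ dvd_zero b)
  have hb : b ≠ 0 := fun h => hab (h ▸ dvd_zero a)
  have hlcm_b := two_mul_le_lcm_of_not_dvd ha hab
  have hlcm_a := two_mul_le_lcm_of_not_dvd hb hba
  rw [Nat.lcm_comm] at hlcm_a
  omega

theorem isAlgebraic_div_pow_of_aeval_eq_zero {K L : Type*} [CommRing K] [Field L] [Algebra K L]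
    {q : MvPolynomial (Fin 2) K} (hq : IsWeightedHomogeneous w q n) (hq0 : q ≠ 0) (hw : w 0 ≠ 0)
    {k : ℕ} (hk : w 1 = w 0 * k) {x : Fin 2 → L} (hx : x 0 ≠ 0) (hzero : aeval x q = 0) :
    IsAlgebraic K (x 1 / x 0 ^ k) := by
  have hexp : ∀ d ∈ q.support, n / w 0 = d 0 + k * d 1 := by
    intro d hd
    have h := hq (mem_support_iff.1 hd)
    rw [weight_fin_two, hk] at h
    exact Nat.div_eq_of_eq_mul_right (Nat.pos_of_ne_zero hw) (by rw [← h]; ring)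
  refine ⟨∑ d ∈ q.support, Polynomial.monomial (d 1) (coeff d q), fun hsum => ?_, ?_⟩
  · obtain ⟨d, hd⟩ := support_nonempty.2 hq0
    have hcoeff := congrArg (Polynomial.coeff · (d 1)) hsum
    simp only [Polynomial.finsetSum_coeff, Polynomial.coeff_monomial, Polynomial.coeff_zero]
      at hcoeff
    rw [Finset.sum_eq_single_of_mem d hd, if_pos rfl] at hcoeff
    · exact mem_support_iff.1 hd hcoeff
    · exact fun e he hne => if_neg fun h => hne
        (injOn_support_of_isWeightedHomogeneous hw hq he hd h)
  · -- Dehomogenization: `q(x₀, x₁) = x₀ ^ (n / w 0) * q(1, x₁ / x₀ ^ k)`.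
    refine (mul_eq_zero.1 ?_).resolve_left (pow_ne_zero (n / w 0) hx)
    rw [← hzero, aeval_def, eval₂_eq', map_sum, Finset.mul_sum]
    refine Finset.sum_congr rfl fun d hd => ?_
    rw [Polynomial.aeval_monomial, Fin.prod_univ_two, hexp d hd, pow_add, pow_mul, div_pow]
    field_simp

end BinaryForms

section ZReduced

theorem exists_eq_C_mul_of_isAlgebraic_div {K τ L : Type*} [Field K] [Field L]
    [Algebra (MvPolynomial τ K) L] [IsFractionRing (MvPolynomial τ K) L] [Algebra K L]
    [IsScalarTower K (MvPolynomial τ K) L] {a c : MvPolynomial τ K} (ha : a ≠ 0)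
    (h : IsAlgebraic K (algebraMap (MvPolynomial τ K) L c / algebraMap (MvPolynomial τ K) L a)) :
    ∃ s : K, c = C s * a := by
  have hinj := IsFractionRing.injective (MvPolynomial τ K) L
  obtain ⟨y, hy⟩ := IsIntegrallyClosed.isIntegral_iff.1
    (h.isIntegral.tower_top (A := MvPolynomial τ K))
  have hcy : c = y * a := hinj <| by
    rw [map_mul, hy, div_mul_cancel₀ _ ((map_ne_zero_iff _ hinj).2 ha)]
  rw [← hy, isAlgebraic_algebraMap_iff hinj] at h
  obtain rfl | hy0 := eq_or_ne y 0
  · exact ⟨0, by rw [hcy, C_0]⟩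
  · obtain ⟨s, -, rfl⟩ := isUnit_iff_eq_C_of_isReduced.1 (h.isIntegral.isUnit hy0)
    exact ⟨s, hcy⟩

theorem degreeOf_sub_C_mul_pow_lt {R σ : Type*} [CommRing R] [DecidableEq σ] {z : σ}
    {u v : MvPolynomial σ R} {k : ℕ} {s : R} (hv : 0 < degreeOf z v)
    (hdeg : degreeOf z v = degreeOf z u * k)
    (hlead : leadingCoeffOf z v = C s * leadingCoeffOf z u ^ k) :
    degreeOf z (v - C s * u ^ k) < degreeOf z v := by
  have hC : isolateVar z (C s : MvPolynomial σ R) = Polynomial.C (C s) := (isolateVar z).commutes s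
  simp only [leadingCoeffOf, ← natDegree_isolateVar, map_sub, map_mul, map_pow, hC]
    at hv hdeg hlead ⊢
  have hle : (Polynomial.C (C s) * isolateVar z u ^ k).natDegree ≤ (isolateVar z v).natDegree :=
    (Polynomial.natDegree_C_mul_le _ _).trans
      (Polynomial.natDegree_pow_le.trans (by rw [hdeg, mul_comm]))
  refine lt_of_le_of_ne (Polynomial.natDegree_sub_le_of_le le_rfl hle |>.trans (max_self _).le) ?_
  intro heq
  have hcoeff : (isolateVar z v - Polynomial.C (C s) * isolateVar z u ^ k).coeff
      (isolateVar z v).natDegree = 0 := by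
    rw [Polynomial.coeff_sub, Polynomial.coeff_natDegree, hlead, Polynomial.coeff_C_mul, hdeg,
      mul_comm _ k, Polynomial.coeff_pow_mul_natDegree, sub_self]
  rw [← heq, Polynomial.coeff_natDegree, Polynomial.leadingCoeff_eq_zero] at hcoeff
  rw [hcoeff, Polynomial.natDegree_zero] at heq
  exact hv.ne heq

namespace IsZReduced

variable {R σ : Type*} [CommRing R] [DecidableEq σ] {z : σ} {u v : MvPolynomial σ R}

theorem symm (h : IsZReduced z u v) : IsZReduced z v u := by
  obtain ⟨hlin, hleft, hright⟩ := h
  refine ⟨fun a b c d hdet => ?_, fun μ hμ k hk => ?_, fun μ hμ k hk => ?_⟩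
  · have := hlin d c b a (by convert hdet using 1; ring)
    rw [add_comm (C d * u), add_comm (C b * u)] at this
    omega
  · have := hright μ hμ k hk
    omega
  · have := hleft μ hμ k hk
    omega

theorem degreeOf_le_degreeOf_sub_C_mul_pow (h : IsZReduced z u v) (s : R) {k : ℕ} (hk : k ≠ 0) :
    degreeOf z v ≤ degreeOf z (v - C s * u ^ k) := by
  obtain rfl | hs := eq_or_ne s 0
  · simp
  have := nontrivial_of_ne s 0 hs
  rw [sub_eq_add_neg, ← neg_mul, ← C_neg]
  obtain rfl | hk2 : k = 1 ∨ 2 ≤ k := by omega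
  · have := h.1 1 0 (-s) 1 (by simp)
    simpa [add_comm v] using this
  · have := h.2.2 (-s) (neg_ne_zero.2 hs) k hk2
    omega

end IsZReduced

end ZReduced

section Substitution

theorem dvd_or_dvd_of_degreeOf_aeval_eq_zero {R σ : Type*} [CommRing R] [IsDomain R] [CharZero R]
    {z : σ} {u v : MvPolynomial σ R} {p : MvPolynomial (Fin 2) R} (hu : 0 < degreeOf z u)
    (hv : 0 < degreeOf z v) (hp : 0 < (aeval ![u, v] p).totalDegree)
    (hz : degreeOf z (aeval ![u, v] p) = 0) :
    degreeOf z u ∣ degreeOf z v ∨ degreeOf z v ∣ degreeOf z u := by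
  obtain ⟨i, huv⟩ := exists_jacobianMinor_ne_zero_of_aeval hu hp hz
  set w : Fin 2 → ℕ := fun i => degreeOf z (![u, v] i)
  set t := (leadingForm w p).support.card - 1
  have hp0 : p ≠ 0 := by rintro rfl; simp at hp
  have huv0 : ∀ i, ![u, v] i ≠ 0 :=
    Fin.forall_fin_two.2 ⟨by rintro rfl; simp at hu, by rintro rfl; simp at hv⟩
  have hform := isWeightedHomogeneous_leadingForm w p
  have hw : 0 < weightedTotalDegree w p := weightedTotalDegree_pos_of_totalDegree_pos
    (Fin.forall_fin_two.2 ⟨hu.ne', hv.ne'⟩) (totalDegree_pos_of_totalDegree_aeval_pos hp)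
  have hlower : t * (degreeOf z u).lcm (degreeOf z v) ≤ weightedTotalDegree w p :=
    card_support_sub_one_mul_lcm_le hu.ne' hv.ne' hform
  have hupper : weightedTotalDegree w p ≤ t * (degreeOf z u + degreeOf z v - 1) := by
    simpa only [hz, zero_add] using weightedTotalDegree_le_degreeOf_aeval_add huv0 hp0
      (degreeOf_aeval_eulerOperator_one_le hu huv)
      (injOn_support_of_isWeightedHomogeneous hu.ne' hform)
  have ht : 0 < t := Nat.pos_of_mul_pos_right (hw.trans_le hupper)
  have hlcm := Nat.le_of_mul_le_mul_left (hlower.trans hupper) ht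
  exact dvd_or_dvd_of_lcm_lt_add (by omega)

theorem aeval_rename_swap {R A : Type*} [CommSemiring R] [CommSemiring A] [Algebra R A] (a b : A)
    (p : MvPolynomial (Fin 2) R) :
    aeval ![b, a] (rename (Equiv.swap 0 1) p) = aeval ![a, b] p := by
  rw [aeval_rename]
  congr 2
  ext i
  fin_cases i <;> rfl

variable {K σ : Type*} [Field K] {z : σ} {u v : MvPolynomial σ K} {p : MvPolynomial (Fin 2) K}

theorem exists_leadingCoeffOf_eq_C_mul_pow [DecidableEq σ] {k : ℕ} (hu : 0 < degreeOf z u)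
    (hdeg : degreeOf z v = degreeOf z u * k) (hp : p ≠ 0)
    (hlt : degreeOf z (aeval ![u, v] p) < weightedTotalDegree (fun i => degreeOf z (![u, v] i)) p) :
    ∃ s : K, leadingCoeffOf z v = C s * leadingCoeffOf z u ^ k := by
  set w : Fin 2 → ℕ := fun i => degreeOf z (![u, v] i)
  let A := MvPolynomial {i // i ≠ z} K
  let L := FractionRing A
  have hu0 : leadingCoeffOf z u ≠ 0 := leadingCoeffOf_ne_zero (by rintro rfl; simp at hu)
  have hzero : aeval (fun i => algebraMap A L (leadingCoeffOf z (![u, v] i)))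
      (leadingForm w p) = 0 := by
    rw [← map_zero (algebraMap A L), ← aeval_leadingForm_eq_zero hlt]
    exact aeval_algebraMap_apply _ _ _
  apply exists_eq_C_mul_of_isAlgebraic_div (L := L) (pow_ne_zero k hu0)
  rw [map_pow]
  exact isAlgebraic_div_pow_of_aeval_eq_zero (isWeightedHomogeneous_leadingForm w p)
    (leadingForm_ne_zero w hp) hu.ne' hdeg
    ((map_ne_zero_iff _ (IsFractionRing.injective A L)).2 hu0) hzero

theorem IsZReduced.degreeOf_aeval_pos_of_dvd [DecidableEq σ] (hred : IsZReduced z u v)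
    (hu : 0 < degreeOf z u) (hv : 0 < degreeOf z v) (hdvd : degreeOf z u ∣ degreeOf z v)
    (hp : 0 < p.totalDegree) : 0 < degreeOf z (aeval ![u, v] p) := by
  by_contra! hz
  obtain ⟨k, hdeg⟩ := hdvd
  have hp0 : p ≠ 0 := by rintro rfl; simp at hp
  have hw : 0 < weightedTotalDegree (fun i => degreeOf z (![u, v] i)) p :=
    weightedTotalDegree_pos_of_totalDegree_pos (Fin.forall_fin_two.2 ⟨hu.ne', hv.ne'⟩) hp
  obtain ⟨s, hlead⟩ := exists_leadingCoeffOf_eq_C_mul_pow hu hdeg hp0 (hz.trans_lt hw)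
  have hk : k ≠ 0 := by rintro rfl; simp [hdeg] at hv
  exact (degreeOf_sub_C_mul_pow_lt hv hdeg hlead).not_ge
    (hred.degreeOf_le_degreeOf_sub_C_mul_pow s hk)

theorem substitution_depends_on_z_general [CharZero K] [DecidableEq σ] (hred : IsZReduced z u v)
    (hu : 0 < degreeOf z u) (hv : 0 < degreeOf z v) (hp : 0 < (aeval ![u, v] p).totalDegree) :
    0 < degreeOf z (aeval ![u, v] p) := by
  by_contra! hz
  obtain huv | hvu := dvd_or_dvd_of_degreeOf_aeval_eq_zero hu hv hp (Nat.le_zero.1 hz)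
  · have hp' := totalDegree_pos_of_totalDegree_aeval_pos hp
    exact hz.not_gt (hred.degreeOf_aeval_pos_of_dvd hu hv huv hp')
  · rw [← aeval_rename_swap] at hp hz
    have hp' := totalDegree_pos_of_totalDegree_aeval_pos hp
    exact hz.not_gt (hred.symm.degreeOf_aeval_pos_of_dvd hv hu hvu hp')

end Substitution

/-- **Proposition 2.3.**  Let `R = K[x₁, …, xₙ, z]` and let `(u, v)` be a
`z`-reduced pair of algebraically independent polynomials in `R`, both actually
depending on `z`.  Then for any nonconstant two-variable polynomial `p`, the
polynomial `p(u, v)` depends on `z` too. -/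
theorem substitution_depends_on_z
    (K : Type*) [Field K] [CharZero K] (n : ℕ)
    (u v : MvPolynomial (Fin (n + 1)) K)
    (huv : AlgebraicIndependent K ![u, v])
    (hred : IsZReduced (Fin.last n) u v)
    (hu : 0 < degreeOf (Fin.last n) u)
    (hv : 0 < degreeOf (Fin.last n) v)
    (p : MvPolynomial (Fin 2) K) (hp : 0 < p.totalDegree) :
    0 < degreeOf (Fin.last n) (aeval ![u, v] p) :=
  substitution_depends_on_z_general hred hu hv
    (totalDegree_aeval_pos_of_algebraicIndependent huv hp)
end

section
/- Let K be a field of characteristic 0, n ≥ 1, and let D be a locally nilpotent K-derivation of the polynomial ring K[x₁, …, xₙ] that admits a slice s (i.e., D(s) = 1). Then s, viewed in K[x₁, …, x_{n+1}] via the natural inclusion, is a coordinate of K[x₁, …, x_{n+1}]: there exists a K-algebra automorphism α of K[x₁, …, x_{n+1}] with α(s) = x₁. -/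
open MvPolynomial

/-!
The slice theorem: if `B` is the ring of constants of a locally nilpotent derivation `D` of a
`ℚ`-algebra `A` with slice `s`, then `A = B[s]` is a polynomial ring in `s`. Indeed `D` acts on
`B[s]` as `d/ds`. Generation is by induction on the order of nilpotency: once `D a = p(s)`,
subtracting from `a` an antiderivative of `p` evaluated at `s` leaves a constant. Independence is
by induction on the degree, differentiating a relation. Hence `A[T] = B[s, T]`, and exchanging `s`
with `T` is an automorphism carrying `s` to a variable.
-/

section SliceTheorem

open Polynomial

theorem derivative_surjective {B : Type*} [Semiring B] [Algebra ℚ B] :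
    Function.Surjective (derivative (R := B)) := by
  intro p
  induction p using Polynomial.induction_on' with
  | add p q hp hq =>
    obtain ⟨P, rfl⟩ := hp
    obtain ⟨Q, rfl⟩ := hq
    exact ⟨P + Q, map_add _ P Q⟩
  | monomial k b =>
    refine ⟨monomial (k + 1) (((k + 1 : ℚ)⁻¹) • b), ?_⟩
    have cast_succ : ((k + 1 : ℕ) : B) = algebraMap ℚ B (k + 1) := by simp
    rw [derivative_monomial, Nat.add_sub_cancel, ← Nat.cast_comm, cast_succ, ← Algebra.smul_def,
      smul_inv_smul₀ (Nat.cast_add_one_ne_zero k)]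

variable {B A : Type*} [CommRing B] [CommRing A] [Algebra B A] {D : Derivation B A A} {s : A}

theorem derivation_aeval_slice (hs : D s = 1) (p : B[X]) :
    D (aeval s p) = aeval s (derivative p) := by
  rw [D.map_aeval, hs, smul_eq_mul, mul_one]

theorem aeval_slice_injective [IsAddTorsionFree B] [FaithfulSMul B A] (hs : D s = 1) :
    Function.Injective (aeval s : B[X] →ₐ[B] A) := by
  rw [injective_iff_map_eq_zero]
  intro p hp
  induction hdeg : p.natDegree using Nat.strong_induction_on generalizing p with
  | _ d ih =>
    have hp' : derivative p = 0 := by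
      by_cases hd : p.natDegree = 0
      · exact derivative_eq_zero.mpr hd
      · refine ih _ (hdeg ▸ natDegree_derivative_lt hd) _ ?_ rfl
        rw [← derivation_aeval_slice hs, hp, map_zero]
    rw [eq_C_of_derivative_eq_zero hp', Polynomial.aeval_C,
      FaithfulSMul.algebraMap_eq_zero_iff] at hp
    rw [eq_C_of_derivative_eq_zero hp', hp, map_zero]

theorem aeval_slice_surjective [Algebra ℚ B]
    (hconst : ∀ a, D a = 0 → a ∈ (algebraMap B A).range)
    (hloc : ∀ a, ∃ k : ℕ, (D.toLinearMap ^ k) a = 0) (hs : D s = 1) :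
    Function.Surjective (aeval s : B[X] →ₐ[B] A) := by
  intro a
  obtain ⟨k, hk⟩ := hloc a
  induction k generalizing a with
  | zero => exact ⟨0, by simpa using hk.symm⟩
  | succ k ih =>
    obtain ⟨p, hp⟩ := ih (D a) hk
    obtain ⟨P, rfl⟩ := derivative_surjective p
    have hD : D (a - aeval s P) = 0 := by
      rw [map_sub, derivation_aeval_slice hs, hp, sub_self]
    obtain ⟨b, hb⟩ := hconst _ hD
    exact ⟨P + Polynomial.C b, by rw [map_add, Polynomial.aeval_C, hb, add_sub_cancel]⟩

end SliceTheorem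

section Constants

open Polynomial

variable {R A : Type*} [CommRing R] [CommRing A] [Algebra R A]

/-- The ring of constants `{a | D a = 0}` of a derivation `D`, as an `R`-subalgebra. -/
def ringOfConstants (D : Derivation R A A) : Subalgebra R A where
  carrier := {a | D a = 0}
  mul_mem' {a b} (ha : D a = 0) (hb : D b = 0) := by simp [ha, hb]
  add_mem' {a b} (ha : D a = 0) (hb : D b = 0) := by simp [ha, hb]
  algebraMap_mem' := D.map_algebraMap

/-- The derivation `D`, regarded as linear over its own ring of constants, so that it can be
applied to polynomials in a slice with constant coefficients. -/
def derivationOverConstants (D : Derivation R A A) : Derivation (ringOfConstants D) A A :=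
  Derivation.mk'
    { toFun := D
      map_add' := map_add D
      map_smul' := fun b a ↦ by
        have hb : D b = 0 := b.2
        simp [Algebra.smul_def, hb] }
    D.leibniz

theorem aeval_slice_bijective [Algebra ℚ R] {D : Derivation R A A}
    (hloc : ∀ a, ∃ k : ℕ, (D.toLinearMap ^ k) a = 0) {s : A} (hs : D s = 1) :
    Function.Bijective (aeval s : (ringOfConstants D)[X] →ₐ[ringOfConstants D] A) := by
  let : Algebra ℚ (ringOfConstants D) := Algebra.compHom (ringOfConstants D) (algebraMap ℚ R)
  have : IsAddTorsionFree (ringOfConstants D) := .of_module_rat _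
  have hs' : derivationOverConstants D s = 1 := hs
  refine ⟨aeval_slice_injective hs',
    aeval_slice_surjective (fun a (ha : D a = 0) ↦ ⟨⟨a, ha⟩, rfl⟩) ?_ hs'⟩
  intro a
  obtain ⟨k, hk⟩ := hloc a
  refine ⟨k, ?_⟩
  rw [Module.End.pow_apply] at hk ⊢
  exact hk

end Constants

open Polynomial in
theorem exists_algEquiv_C_eq_X_of_bijective_aeval {B A : Type*} [CommSemiring B] [CommSemiring A]
    [Algebra B A] {s : A} (hs : Function.Bijective (aeval s : B[X] →ₐ[B] A)) :
    ∃ σ : A[X] ≃ₐ[B] A[X], σ (Polynomial.C s) = Polynomial.X := by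
  let e : B[X] ≃ₐ[B] A := AlgEquiv.ofBijective (aeval s) hs
  have he : e Polynomial.X = s := Polynomial.aeval_X s
  refine ⟨(mapAlgEquiv e).symm.trans (Bivariate.swap.trans (mapAlgEquiv e)), ?_⟩
  have hsymm : (mapAlgEquiv e).symm (Polynomial.C s) = Polynomial.C Polynomial.X := by
    rw [AlgEquiv.symm_apply_eq, coe_mapAlgEquiv, Polynomial.map_C]
    exact congrArg Polynomial.C he.symm
  rw [AlgEquiv.trans_apply, AlgEquiv.trans_apply, hsymm, Bivariate.swap_X, coe_mapAlgEquiv,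
    Polynomial.map_X]

theorem optionEquivLeft_rename_some {R σ : Type*} [CommSemiring R] (p : MvPolynomial σ R) :
    optionEquivLeft R σ (rename some p) = Polynomial.C p := by
  induction p using MvPolynomial.induction_on with
  | C r => simp
  | add p q hp hq => simp [hp, hq]
  | mul_X p i hp => simp [hp]

theorem slice_is_stable_coordinate_general {R σ : Type*} [CommRing R] [Algebra ℚ R]
    (D : Derivation R (MvPolynomial σ R) (MvPolynomial σ R))
    (hloc : ∀ g : MvPolynomial σ R, ∃ k : ℕ, (D.toLinearMap ^ k) g = 0)
    (s : MvPolynomial σ R) (hs : D s = 1) :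
    ∃ α : MvPolynomial (Option σ) R ≃ₐ[R] MvPolynomial (Option σ) R,
      α (rename some s) = X none := by
  obtain ⟨τ, hτ⟩ := exists_algEquiv_C_eq_X_of_bijective_aeval (aeval_slice_bijective hloc hs)
  let e := optionEquivLeft R σ
  refine ⟨e.trans ((τ.restrictScalars R).trans e.symm), ?_⟩
  calc e.symm (τ (e (rename some s)))
      = e.symm (τ (Polynomial.C s)) := by rw [optionEquivLeft_rename_some]
    _ = e.symm Polynomial.X := by rw [hτ]
    _ = X none := optionEquivLeft_symm_X R σ

/-- **Key step in the proof of Theorem 1.2.**  Let `D` be a locally nilpotent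
`K`-derivation of `K[x₁, …, xₙ]` with a slice `s`.  Then `s`, viewed in
`K[x₁, …, x_{n+1}]` via the natural inclusion, is a coordinate of
`K[x₁, …, x_{n+1}]`. -/
theorem slice_is_stable_coordinate
    (K : Type) [Field K] [CharZero K] (n : ℕ) (hn : 1 ≤ n)
    (D : Derivation K (MvPolynomial (Fin n) K) (MvPolynomial (Fin n) K))
    (hloc : ∀ g : MvPolynomial (Fin n) K,
      ∃ k : ℕ, 0 < k ∧ (D.toLinearMap ^ k) g = 0)
    (s : MvPolynomial (Fin n) K) (hs : D s = 1) :
    ∃ α : MvPolynomial (Fin (n + 1)) K ≃ₐ[K] MvPolynomial (Fin (n + 1)) K,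
      α (rename Fin.castSucc s) = X 0 := by
  obtain ⟨α, hα⟩ := slice_is_stable_coordinate_general D
    (fun g ↦ (hloc g).imp fun _ ↦ And.right) s hs
  exact ⟨(renameEquiv K finSuccEquivLast).trans
    (α.trans (renameEquiv K (_root_.finSuccEquiv n)).symm),
    by simp [rename_rename, Function.comp_def, hα]⟩
end

section
/- The quotient algebras ℂ[x, y, z]/(xy² + z² + 1) and ℂ[x, y, z]/(xy² + z²y − z² + y − 1) are isomorphic as ℂ-algebras. -/
open MvPolynomial

/-!
Put `q = z² + 1`. The two algebras arise from `R[y, z]` by adjoining a root `x` of `y² x + q`,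
respectively of `y² x + (y - 1) q`. Multiplication by `y - 1` turns a root of the former into a root
of the latter. Since `y - 1` is coprime to `y²`, this change of root is invertible: if
`w a + v u = 1` and `a x + u q = 0`, then `v x - w q` is a root of `a X + q`.
-/

/-- The `A`-algebra generated by one element `x` subject to the linear relation `a x + q = 0`. -/
abbrev AdjoinLinearRoot {A : Type*} [CommRing A] (a q : A) : Type _ :=
  AdjoinRoot (.C a * .X + .C q : Polynomial A)

namespace AdjoinLinearRoot

variable {A B : Type*} [CommRing A] [CommRing B] [Algebra A B]

/-- The generator of `AdjoinLinearRoot a q`, satisfying `a x + q = 0`. -/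
noncomputable def root (a q : A) : AdjoinLinearRoot a q :=
  AdjoinRoot.root _

theorem algebraMap_mul_root_add (a q : A) :
    algebraMap A (AdjoinLinearRoot a q) a * root a q + algebraMap A _ q = 0 := by
  simpa [root] using AdjoinRoot.eval₂_root (.C a * .X + .C q : Polynomial A)

/-- The universal property of `AdjoinLinearRoot a q`: a solution `x` of `a x + q = 0` in an
`A`-algebra determines an algebra homomorphism sending the generator to `x`. -/
noncomputable def lift {a q : A} (x : B) (hx : algebraMap A B a * x + algebraMap A B q = 0) :
    AdjoinLinearRoot a q →ₐ[A] B :=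
  AdjoinRoot.liftAlgHom _ (Algebra.ofId A B) x (by simpa [Algebra.ofId_apply] using hx)

@[simp]
theorem lift_root {a q : A} (x : B) (hx : algebraMap A B a * x + algebraMap A B q = 0) :
    lift x hx (root a q) = x :=
  AdjoinRoot.liftAlgHom_root ..

theorem algHom_ext {a q : A} {φ ψ : AdjoinLinearRoot a q →ₐ[A] B}
    (h : φ (root a q) = ψ (root a q)) : φ = ψ :=
  AdjoinRoot.algHom_ext h

/-- Rescaling the constant term of `a x + q = 0` by a unit `u` modulo `a`, whose invertibility is
witnessed by the Bézout relation `w a + v u = 1`. -/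
noncomputable def equivOfBezout {a u v w : A} (bezout : w * a + v * u = 1) (q : A) :
    AdjoinLinearRoot a q ≃ₐ[A] AdjoinLinearRoot a (u * q) :=
  have bezout_map (r : A) := congrArg (algebraMap A (AdjoinLinearRoot a r)) bezout
  have root_rel := algebraMap_mul_root_add a q
  have root_rel' := algebraMap_mul_root_add a (u * q)
  AlgEquiv.ofAlgHom
    (lift (algebraMap A _ v * root a (u * q) - algebraMap A _ (w * q)) (by
      simp only [map_add, map_mul, map_one] at bezout_map root_rel' ⊢
      linear_combination algebraMap A _ v * root_rel' - algebraMap A _ q * bezout_map (u * q)))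
    (lift (algebraMap A _ u * root a q) (by
      rw [map_mul]
      linear_combination algebraMap A _ u * root_rel))
    (algHom_ext (by
      simp only [AlgHom.comp_apply, AlgHom.id_apply, AlgHom.commutes, lift_root,
        map_add, map_mul, map_one] at bezout_map root_rel' ⊢
      linear_combination root a (u * q) * bezout_map (u * q) - algebraMap A _ w * root_rel'))
    (algHom_ext (by
      simp only [AlgHom.comp_apply, AlgHom.id_apply, AlgHom.commutes, lift_root,
        map_add, map_sub, map_mul, map_one] at bezout_map ⊢
      linear_combination root a q * bezout_map q - algebraMap A _ w * root_rel))

end AdjoinLinearRoot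

section Hypersurface

variable {R : Type*} [CommRing R] {n : ℕ}

/-- The coordinate ring of a hypersurface whose equation `p` has degree at most one in the variable
`X 0`, viewed as an algebra over the polynomial ring in the remaining variables. -/
noncomputable def quotientSpanEquivAdjoinLinearRoot {p : MvPolynomial (Fin (n + 1)) R}
    {a q : MvPolynomial (Fin n) R} (hp : finSuccEquiv R n p = .C a * .X + .C q) :
    (MvPolynomial (Fin (n + 1)) R ⧸ Ideal.span {p}) ≃ₐ[R] AdjoinLinearRoot a q :=
  Ideal.quotientEquivAlg _ _ (finSuccEquiv R n) (by simp [Ideal.map_span, hp])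

theorem nonempty_quotientSpan_algEquiv_of_isCoprime {f g : MvPolynomial (Fin (n + 1)) R}
    {a u q : MvPolynomial (Fin n) R} (hau : IsCoprime a u)
    (hf : finSuccEquiv R n f = .C a * .X + .C q)
    (hg : finSuccEquiv R n g = .C a * .X + .C (u * q)) :
    Nonempty ((MvPolynomial (Fin (n + 1)) R ⧸ Ideal.span {f}) ≃ₐ[R]
      (MvPolynomial (Fin (n + 1)) R ⧸ Ideal.span {g})) := by
  obtain ⟨w, v, bezout⟩ := hau
  exact ⟨(quotientSpanEquivAdjoinLinearRoot hf).trans <|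
    ((AdjoinLinearRoot.equivOfBezout bezout q).restrictScalars R).trans
      (quotientSpanEquivAdjoinLinearRoot hg).symm⟩

end Hypersurface

theorem danielewski_quotients_isomorphic_general (R : Type*) [CommRing R] :
    Nonempty
      ((MvPolynomial (Fin 3) R ⧸
          Ideal.span {(X 0 * X 1 ^ 2 + X 2 ^ 2 + 1 : MvPolynomial (Fin 3) R)}) ≃ₐ[R]
        (MvPolynomial (Fin 3) R ⧸
          Ideal.span {(X 0 * X 1 ^ 2 + X 2 ^ 2 * X 1 - X 2 ^ 2 + X 1 - 1 :
            MvPolynomial (Fin 3) R)})) := by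
  have image_x : finSuccEquiv R 2 (X 0) = .X := finSuccEquiv_X_zero
  have image_y : finSuccEquiv R 2 (X 1) = .C (X 0) := finSuccEquiv_X_succ (j := 0)
  have image_z : finSuccEquiv R 2 (X 2) = .C (X 1) := finSuccEquiv_X_succ (j := 1)
  have coprime : IsCoprime (X 0 ^ 2 : MvPolynomial (Fin 2) R) (X 0 - 1) :=
    ⟨1, -(X 0 + 1), by ring⟩
  apply nonempty_quotientSpan_algEquiv_of_isCoprime (q := X 1 ^ 2 + 1) coprime
  · simp only [map_add, map_mul, map_pow, map_one, image_x, image_y, image_z]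
    ring
  · simp only [map_add, map_sub, map_mul, map_pow, map_one, image_x, image_y, image_z]
    ring

/-- **Isomorphism of the two quotient algebras in the proof of Proposition 1.3.**
`ℂ[x, y, z]/(xy² + z² + 1)` and `ℂ[x, y, z]/(xy² + z²y − z² + y − 1)` are
isomorphic as `ℂ`-algebras. -/
theorem danielewski_quotients_isomorphic :
    Nonempty
      ((MvPolynomial (Fin 3) ℂ ⧸
          Ideal.span {(X 0 * X 1 ^ 2 + X 2 ^ 2 + 1 : MvPolynomial (Fin 3) ℂ)}) ≃ₐ[ℂ]
        (MvPolynomial (Fin 3) ℂ ⧸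
          Ideal.span {(X 0 * X 1 ^ 2 + X 2 ^ 2 * X 1 - X 2 ^ 2 + X 1 - 1 :
            MvPolynomial (Fin 3) ℂ)})) :=
  danielewski_quotients_isomorphic_general ℂ
end

section
/- Let p = x₁x₂² + x₃² + 1 and q = x₁x₂² + x₃²x₂ − x₃² + x₂ − 1. For every m ≥ 3, there is no ℂ-algebra automorphism of ℂ[x₁, …, xₘ] that maps p to q (where p and q are viewed in ℂ[x₁, …, xₘ] via the natural inclusion); that is, p and q are not equivalent and not even stably equivalent. -/
open MvPolynomial

/-!
The polynomial `p` has critical points (all points with `x₂ = x₃ = 0`), whereas `q` has none: its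
partial derivatives `x₂²`, `2x₁x₂ + x₃² + 1` and `2x₃(x₂ - 1)` generate the unit ideal. Having a
critical point is invariant under automorphisms, and new variables do not affect it.
-/

section JacobianIdeal

variable (R : Type*) {A B : Type*} [CommRing R] [CommRing A] [CommRing B]
  [Algebra R A] [Algebra R B]

/-- The Jacobian ideal of an element `f` of an `R`-algebra, whose zero locus is the set of critical
points of `f`. It is generated by the values at `f` of all `R`-derivations, rather than by partial
derivatives, so that its invariance under isomorphisms needs no choice of coordinates. -/
def jacobianIdeal (f : A) : Ideal A :=
  Ideal.span (Set.range fun D : Derivation R A A ↦ D f)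

variable {R}

theorem derivation_apply_mem_jacobianIdeal (D : Derivation R A A) (f : A) :
    D f ∈ jacobianIdeal R f :=
  Ideal.subset_span ⟨D, rfl⟩

/-- The transport `φ ∘ D ∘ φ⁻¹` of a derivation `D` along an algebra isomorphism `φ`. -/
def conjDerivation (φ : A ≃ₐ[R] B) (D : Derivation R A A) : Derivation R B B :=
  Derivation.mk' (φ.toLinearMap ∘ₗ D.toLinearMap ∘ₗ φ.symm.toLinearMap) fun a b ↦ by simp

@[simp]
theorem conjDerivation_apply (φ : A ≃ₐ[R] B) (D : Derivation R A A) (b : B) :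
    conjDerivation φ D b = φ (D (φ.symm b)) :=
  rfl

theorem map_jacobianIdeal (φ : A ≃ₐ[R] B) (f : A) :
    (jacobianIdeal R f).map φ = jacobianIdeal R (φ f) := by
  apply le_antisymm
  · rw [jacobianIdeal, Ideal.map_span, Ideal.span_le]
    rintro _ ⟨_, ⟨D, rfl⟩, rfl⟩
    simpa using derivation_apply_mem_jacobianIdeal (conjDerivation φ D) (φ f)
  · rw [jacobianIdeal, Ideal.span_le]
    rintro _ ⟨D, rfl⟩
    simpa using Ideal.mem_map_of_mem φ
      (derivation_apply_mem_jacobianIdeal (conjDerivation φ.symm D) f)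

theorem jacobianIdeal_algEquiv_apply_eq_top_iff (φ : A ≃ₐ[R] B) (f : A) :
    jacobianIdeal R (φ f) = ⊤ ↔ jacobianIdeal R f = ⊤ := by
  rw [← map_jacobianIdeal]
  refine ⟨fun h ↦ ?_, fun h ↦ h ▸ Ideal.map_top φ⟩
  rw [← Ideal.comap_map_of_bijective φ φ.bijective (I := jacobianIdeal R f), h, Ideal.comap_top]

theorem jacobianIdeal_mul_sq_add_sq_add_one_le (a b c : A) :
    jacobianIdeal R (a * b ^ 2 + c ^ 2 + 1) ≤ Ideal.span {b, c} := by
  rw [jacobianIdeal, Ideal.span_le]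
  rintro _ ⟨D, rfl⟩
  refine Ideal.mem_span_pair.mpr ⟨2 * a * D b + b * D a, 2 * D c, ?_⟩
  simp only [map_add, Derivation.leibniz, Derivation.leibniz_pow, Derivation.map_one_eq_zero,
    smul_eq_mul, nsmul_eq_mul]
  ring

theorem derivation_mul_sq_add_sq_mul_sub_sq_add_sub_one (D : Derivation R A A) (a b c : A) :
    D (a * b ^ 2 + c ^ 2 * b - c ^ 2 + b - 1) =
      b ^ 2 * D a + (2 * a * b + c ^ 2 + 1) * D b + 2 * (c * (b - 1)) * D c := by
  simp only [map_add, map_sub, Derivation.leibniz, Derivation.leibniz_pow,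
    Derivation.map_one_eq_zero, smul_eq_mul, nsmul_eq_mul]
  ring

end JacobianIdeal

theorem ideal_eq_top_of_sq_mem_of_add_one_mem_of_two_mul_mem {A : Type*} [CommRing A]
    (h2 : IsUnit (2 : A)) {I : Ideal A} {a b c : A} (hb : b ^ 2 ∈ I)
    (habc : 2 * a * b + c ^ 2 + 1 ∈ I) (hbc : 2 * (c * (b - 1)) ∈ I) : I = ⊤ := by
  by_contra hI
  obtain ⟨M, hM, hIM⟩ := I.exists_le_maximal hI
  have hbM : b ∈ M := hM.isPrime.mem_of_pow_mem 2 (hIM hb)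
  have hcM : c ∈ M := by
    have hcb : c * (b - 1) ∈ M := (M.unit_mul_mem_iff_mem h2).mp (hIM hbc)
    convert M.sub_mem (M.mul_mem_left c hbM) hcb using 1
    ring
  apply hM.ne_top
  rw [M.eq_top_iff_one]
  convert M.sub_mem (hIM habc)
    (M.add_mem (M.mul_mem_left (2 * a) hbM) (M.mul_mem_left c hcM)) using 1
  ring

section MvPolynomial

variable {R σ : Type*} [CommRing R]

theorem span_X_image_ne_top [Nontrivial R] (s : Set σ) :
    Ideal.span (X '' s : Set (MvPolynomial σ R)) ≠ ⊤ := by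
  have hle : Ideal.span (X '' s) ≤ RingHom.ker (constantCoeff : MvPolynomial σ R →+* R) := by
    rw [Ideal.span_le]
    rintro _ ⟨i, -, rfl⟩
    exact constantCoeff_X R i
  exact ne_top_of_le_ne_top (RingHom.ker_ne_top _) hle

theorem jacobianIdeal_X_mul_sq_add_sq_add_one_ne_top [Nontrivial R] (i j k : σ) :
    jacobianIdeal R (X i * X j ^ 2 + X k ^ 2 + 1 : MvPolynomial σ R) ≠ ⊤ := by
  refine ne_top_of_le_ne_top ?_ (jacobianIdeal_mul_sq_add_sq_add_one_le _ _ _)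
  rw [← Set.image_pair]
  exact span_X_image_ne_top {j, k}

theorem jacobianIdeal_X_mul_sq_add_sq_mul_sub_sq_add_sub_one_eq_top (h2 : IsUnit (2 : R))
    {i j k : σ} (hij : i ≠ j) (hik : i ≠ k) (hjk : j ≠ k) :
    jacobianIdeal R
      (X i * X j ^ 2 + X k ^ 2 * X j - X k ^ 2 + X j - 1 : MvPolynomial σ R) = ⊤ := by
  set q : MvPolynomial σ R := X i * X j ^ 2 + X k ^ 2 * X j - X k ^ 2 + X j - 1 with hq
  have hi : pderiv i q = X j ^ 2 := by
    simp [hq, derivation_mul_sq_add_sq_mul_sub_sq_add_sub_one, pderiv_X_of_ne hij.symm,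
      pderiv_X_of_ne hik.symm]
  have hj : pderiv j q = 2 * X i * X j + X k ^ 2 + 1 := by
    simp [hq, derivation_mul_sq_add_sq_mul_sub_sq_add_sub_one, pderiv_X_of_ne hij,
      pderiv_X_of_ne hjk.symm]
  have hk : pderiv k q = 2 * (X k * (X j - 1)) := by
    simp [hq, derivation_mul_sq_add_sq_mul_sub_sq_add_sub_one, pderiv_X_of_ne hik,
      pderiv_X_of_ne hjk]
  have h2' : IsUnit (2 : MvPolynomial σ R) := by simpa only [map_ofNat] using h2.map (C (σ := σ))
  exact ideal_eq_top_of_sq_mem_of_add_one_mem_of_two_mul_mem h2'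
    (hi ▸ derivation_apply_mem_jacobianIdeal (pderiv i) q)
    (hj ▸ derivation_apply_mem_jacobianIdeal (pderiv j) q)
    (hk ▸ derivation_apply_mem_jacobianIdeal (pderiv k) q)

theorem p_q_stably_inequivalent_general [Nontrivial R] (h2 : IsUnit (2 : R)) {f : Fin 3 → σ}
    (hf : f.Injective) :
    ¬ ∃ φ : MvPolynomial σ R ≃ₐ[R] MvPolynomial σ R,
      φ (rename f (X 0 * X 1 ^ 2 + X 2 ^ 2 + 1 : MvPolynomial (Fin 3) R)) =
        rename f
          (X 0 * X 1 ^ 2 + X 2 ^ 2 * X 1 - X 2 ^ 2 + X 1 - 1 : MvPolynomial (Fin 3) R) := by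
  rintro ⟨φ, hφ⟩
  have hp : jacobianIdeal R
      (rename f (X 0 * X 1 ^ 2 + X 2 ^ 2 + 1 : MvPolynomial (Fin 3) R)) ≠ ⊤ := by
    simpa using jacobianIdeal_X_mul_sq_add_sq_add_one_ne_top (R := R) (f 0) (f 1) (f 2)
  have hq : jacobianIdeal R (rename f
      (X 0 * X 1 ^ 2 + X 2 ^ 2 * X 1 - X 2 ^ 2 + X 1 - 1 : MvPolynomial (Fin 3) R)) = ⊤ := by
    simpa using jacobianIdeal_X_mul_sq_add_sq_mul_sub_sq_add_sub_one_eq_top h2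
      (hf.ne (by decide : (0 : Fin 3) ≠ 1)) (hf.ne (by decide : (0 : Fin 3) ≠ 2))
      (hf.ne (by decide : (1 : Fin 3) ≠ 2))
  exact hp ((jacobianIdeal_algEquiv_apply_eq_top_iff φ _).mp (hφ ▸ hq))

end MvPolynomial

/-- **Stable inequivalence in the proof of Proposition 1.3.**  For
`p = x₁x₂² + x₃² + 1` and `q = x₁x₂² + x₃²x₂ − x₃² + x₂ − 1` and every `m ≥ 3`,
no `ℂ`-algebra automorphism of `ℂ[x₁, …, xₘ]` maps `p` to `q` (both viewed via
the natural inclusion `ℂ[x₁, x₂, x₃] → ℂ[x₁, …, xₘ]`). -/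
theorem p_q_stably_inequivalent (m : ℕ) (hm : 3 ≤ m) :
    ¬ ∃ φ : MvPolynomial (Fin m) ℂ ≃ₐ[ℂ] MvPolynomial (Fin m) ℂ,
      φ (rename (Fin.castLE hm)
          (X 0 * X 1 ^ 2 + X 2 ^ 2 + 1 : MvPolynomial (Fin 3) ℂ)) =
        rename (Fin.castLE hm)
          (X 0 * X 1 ^ 2 + X 2 ^ 2 * X 1 - X 2 ^ 2 + X 1 - 1 : MvPolynomial (Fin 3) ℂ) :=
  p_q_stably_inequivalent_general (IsUnit.mk0 2 two_ne_zero) (Fin.castLE_injective hm)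
end

section
/- For every k ≥ 3, the polynomials p = x₁x₂² + x₃² + 1 and q = x₁x₂² + x₃²x₂ − x₃² + x₂ − 1, viewed in ℂ[x₁, …, x_k] via the natural inclusion, satisfy: the quotient ℂ-algebras ℂ[x₁, …, x_k]/(p) and ℂ[x₁, …, x_k]/(q) are isomorphic, but there is no ℂ-algebra automorphism of ℂ[x₁, …, x_k] mapping p to q. In other words, the hypersurface D(2) × ℂ^{k−3} = {x₁x₂² + x₃² + 1 = 0} has at least two inequivalent embeddings in ℂ^k. -/
open MvPolynomial

/-!
Put `s = x₃² + 1`, so that `p = x₁x₂² + s` and `q = x₁x₂² + (x₂ - 1)s`. Since `x₂ - 1` is a unit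
modulo `x₂²`, the equations `ax + s = 0` and `ay + us = 0` with `a = x₂²`, `u = x₂ - 1` have
corresponding solutions through `y = ux`, and so the quotients by `p` and `q` are isomorphic.
On the other hand `p` has a critical point, the origin, whereas `q` has none. Having a critical
point is invariant under automorphisms and under scaling by constants, and the units of the
polynomial ring are constants, so no automorphism carries the ideal `(p)` to `(q)`.
-/

section LinearPolynomial

variable {S : Type*} [CommRing S]

/-- The polynomial `aX + s`. Adjoining a root of it to `S` gives the coordinate ring of the
hypersurface `ax + s = 0` in the affine line over `Spec S`. -/
noncomputable def linearPolynomial (a s : S) : Polynomial S :=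
  Polynomial.C a * Polynomial.X + Polynomial.C s

theorem aeval_linearPolynomial {T : Type*} [CommRing T] [Algebra S T] (a s : S) (x : T) :
    Polynomial.aeval x (linearPolynomial a s) = algebraMap S T a * x + algebraMap S T s := by
  simp only [linearPolynomial, map_add, map_mul, Polynomial.aeval_C, Polynomial.aeval_X]

theorem algebraMap_mul_root_linearPolynomial_add (a s : S) :
    algebraMap S (AdjoinRoot (linearPolynomial a s)) a *
        AdjoinRoot.root (linearPolynomial a s) +
      algebraMap S (AdjoinRoot (linearPolynomial a s)) s = 0 := by
  rw [← aeval_linearPolynomial, AdjoinRoot.aeval_eq, AdjoinRoot.mk_self]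

theorem nonempty_adjoinRoot_linearPolynomial_algEquiv_of_isCoprime {a u : S}
    (h : IsCoprime a u) (s : S) :
    Nonempty (AdjoinRoot (linearPolynomial a s) ≃ₐ[S]
      AdjoinRoot (linearPolynomial a (u * s))) := by
  obtain ⟨w, v, hwv⟩ := h
  let P := AdjoinRoot (linearPolynomial a s)
  let Q := AdjoinRoot (linearPolynomial a (u * s))
  let x : P := AdjoinRoot.root _
  let y : Q := AdjoinRoot.root _
  have hx : algebraMap S P a * x + algebraMap S P s = 0 :=
    algebraMap_mul_root_linearPolynomial_add a s
  have hy : algebraMap S Q a * y + algebraMap S Q u * algebraMap S Q s = 0 := by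
    rw [← map_mul]
    exact algebraMap_mul_root_linearPolynomial_add a (u * s)
  have bezout (T : Type _) [CommRing T] [Algebra S T] :
      algebraMap S T w * algebraMap S T a + algebraMap S T v * algebraMap S T u = 1 := by
    rw [← map_mul, ← map_mul, ← map_add, hwv, map_one]
  let toQ : P →ₐ[S] Q := AdjoinRoot.liftAlgHom _ (Algebra.ofId S Q)
    (algebraMap S Q v * y - algebraMap S Q w * algebraMap S Q s) <| by
      refine (aeval_linearPolynomial a s _).trans ?_
      linear_combination algebraMap S Q v * hy - algebraMap S Q s * bezout Q
  let toP : Q →ₐ[S] P := AdjoinRoot.liftAlgHom _ (Algebra.ofId S P) (algebraMap S P u * x) <| by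
      refine (aeval_linearPolynomial a (u * s) _).trans ?_
      rw [map_mul]
      linear_combination algebraMap S P u * hx
  have toQ_x : toQ x = algebraMap S Q v * y - algebraMap S Q w * algebraMap S Q s :=
    AdjoinRoot.liftAlgHom_root ..
  have toP_y : toP y = algebraMap S P u * x := AdjoinRoot.liftAlgHom_root ..
  refine ⟨AlgEquiv.ofAlgHom toQ toP (AdjoinRoot.algHom_ext ?_) (AdjoinRoot.algHom_ext ?_)⟩
  · change toQ (toP y) = y
    rw [toP_y, map_mul, toQ_x, AlgHom.commutes]
    linear_combination y * bezout Q - algebraMap S Q w * hy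
  · change toP (toQ x) = x
    simp only [toQ_x, map_sub, map_mul, toP_y, AlgHom.commutes]
    linear_combination x * bezout P - algebraMap S P w * hx

end LinearPolynomial

section LinearHypersurface

variable {σ R : Type*} [CommRing R]

open scoped Classical in
/-- A polynomial ring as the ring of polynomials in the single variable `X i`, with coefficients
in the remaining variables. -/
noncomputable def isolateVariable (R : Type*) [CommRing R] (i : σ) :
    MvPolynomial σ R ≃ₐ[R] Polynomial (MvPolynomial {j // j ≠ i} R) :=
  (renameEquiv R (Equiv.optionSubtypeNe i).symm).trans (optionEquivLeft R {j // j ≠ i})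

theorem isolateVariable_X_self (i : σ) : isolateVariable R i (X i) = Polynomial.X := by
  simp [isolateVariable]

theorem isolateVariable_rename (i : σ) (a : MvPolynomial {j // j ≠ i} R) :
    isolateVariable R i (rename (↑) a) = Polynomial.C a := by
  have h : (isolateVariable R i).toAlgHom.comp (rename Subtype.val) =
      Polynomial.CAlgHom := by
    ext j : 1
    simp [isolateVariable, j.2]
  exact DFunLike.congr_fun h a

theorem nonempty_quotient_span_algEquiv_adjoinRoot (i : σ) (a s : MvPolynomial {j // j ≠ i} R) :
    Nonempty ((MvPolynomial σ R ⧸ Ideal.span {rename (↑) a * X i + rename (↑) s}) ≃ₐ[R]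
      AdjoinRoot (linearPolynomial a s)) := by
  refine ⟨Ideal.quotientEquivAlg _ _ (isolateVariable R i) ?_⟩
  rw [Ideal.map_span, Set.image_singleton]
  simp [linearPolynomial, isolateVariable_X_self, isolateVariable_rename]

theorem nonempty_quotient_span_algEquiv_of_isCoprime {i : σ} {a u : MvPolynomial {j // j ≠ i} R}
    (h : IsCoprime a u) (s : MvPolynomial {j // j ≠ i} R) :
    Nonempty ((MvPolynomial σ R ⧸ Ideal.span {rename (↑) a * X i + rename (↑) s}) ≃ₐ[R]
      (MvPolynomial σ R ⧸ Ideal.span {rename (↑) a * X i + rename (↑) (u * s)})) := by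
  obtain ⟨e⟩ := nonempty_adjoinRoot_linearPolynomial_algEquiv_of_isCoprime h s
  obtain ⟨e₁⟩ := nonempty_quotient_span_algEquiv_adjoinRoot i a s
  obtain ⟨e₂⟩ := nonempty_quotient_span_algEquiv_adjoinRoot i a (u * s)
  exact ⟨e₁.trans ((e.restrictScalars R).trans e₂.symm)⟩

end LinearHypersurface

section CriticalPoint

variable {R A B : Type*} [CommRing R] [CommRing A] [Algebra R A] [CommRing B] [Algebra R B]

variable (R) in
/-- The function `f` on `Spec A` has a critical point among the `R`-points of `Spec A`. The
vanishing of `df` at the `R`-point `e`, with ideal `m = ker e`, is expressed without coordinates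
by `f - f(e) ∈ m²`. -/
def HasCriticalPoint (f : A) : Prop :=
  ∃ e : A →ₐ[R] R, f - algebraMap R A (e f) ∈ RingHom.ker e ^ 2

theorem HasCriticalPoint.map_algEquiv {f : A} (hf : HasCriticalPoint R f) (φ : A ≃ₐ[R] B) :
    HasCriticalPoint R (φ f) := by
  obtain ⟨e, he⟩ := hf
  let e' : B →ₐ[R] R := e.comp φ.symm
  have map_ker_le : (RingHom.ker e).map φ ≤ RingHom.ker e' :=
    Ideal.map_le_iff_le_comap.2 fun a ha ↦ by simpa [e', RingHom.mem_ker] using ha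
  refine ⟨e', Ideal.pow_right_mono map_ker_le 2 ?_⟩
  rw [← Ideal.map_pow]
  simpa [e'] using Ideal.mem_map_of_mem φ he

theorem HasCriticalPoint.smul {f : A} (hf : HasCriticalPoint R f) (c : R) :
    HasCriticalPoint R (c • f) := by
  obtain ⟨e, he⟩ := hf
  refine ⟨e, ?_⟩
  simpa [Algebra.smul_def, mul_sub] using Ideal.mul_mem_left _ (algebraMap R A c) he

theorem derivation_mem_of_mem_sq (D : Derivation R A A) {I : Ideal A} {f : A} (hf : f ∈ I ^ 2) :
    D f ∈ I := by
  rw [pow_two] at hf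
  refine Submodule.mul_induction_on hf (fun a ha b hb ↦ ?_) fun a b ha hb ↦ ?_
  · rw [D.leibniz]
    exact I.add_mem (I.mul_mem_right _ ha) (I.mul_mem_right _ hb)
  · rw [map_add]
    exact I.add_mem ha hb

theorem HasCriticalPoint.exists_forall_derivation_eq_zero {f : A} (hf : HasCriticalPoint R f) :
    ∃ e : A →ₐ[R] R, ∀ D : Derivation R A A, e (D f) = 0 := by
  obtain ⟨e, he⟩ := hf
  refine ⟨e, fun D ↦ ?_⟩
  simpa [RingHom.mem_ker] using derivation_mem_of_mem_sq D he

theorem HasCriticalPoint.of_map_span_eq_span {σ : Type*} [IsDomain R] {f : A}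
    {g : MvPolynomial σ R} (hf : HasCriticalPoint R f) (φ : A ≃ₐ[R] MvPolynomial σ R)
    (h : (Ideal.span {f}).map φ = Ideal.span {g}) : HasCriticalPoint R g := by
  rw [Ideal.map_span, Set.image_singleton, Ideal.span_singleton_eq_span_singleton] at h
  obtain ⟨u, rfl⟩ := h
  obtain ⟨c, -, hc⟩ := isUnit_iff_eq_C_of_isReduced.1 u.isUnit
  rw [hc, mul_comm, ← smul_eq_C_mul]
  exact (hf.map_algEquiv φ).smul c

end CriticalPoint

section Danielewski

variable {σ R : Type*} [CommRing R] {i j l : σ}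

variable (R) in
/-- The equation `xy² + z² + 1` of the Danielewski surface `D(2)` in the variables `x = X i`,
`y = X j`, `z = X l`. -/
noncomputable def danielewskiPolynomial (i j l : σ) : MvPolynomial σ R :=
  X i * X j ^ 2 + X l ^ 2 + 1

variable (R) in
/-- The equation `xy² + (y - 1)(z² + 1)`, written in expanded form, of the second embedding of the
Danielewski surface `D(2)`, in the variables `x = X i`, `y = X j`, `z = X l`. -/
noncomputable def twistedDanielewskiPolynomial (i j l : σ) : MvPolynomial σ R :=
  X i * X j ^ 2 + X l ^ 2 * X j - X l ^ 2 + X j - 1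

theorem nonempty_quotient_danielewski_algEquiv_twistedDanielewski (hji : j ≠ i) (hli : l ≠ i) :
    Nonempty ((MvPolynomial σ R ⧸ Ideal.span {danielewskiPolynomial R i j l}) ≃ₐ[R]
      (MvPolynomial σ R ⧸ Ideal.span {twistedDanielewskiPolynomial R i j l})) := by
  let y : MvPolynomial {m // m ≠ i} R := X ⟨j, hji⟩
  let z : MvPolynomial {m // m ≠ i} R := X ⟨l, hli⟩
  have coprime : IsCoprime (y ^ 2) (y - 1) := ⟨1, -(y + 1), by ring⟩
  convert nonempty_quotient_span_algEquiv_of_isCoprime coprime (z ^ 2 + 1) using 5 <;>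
    simp only [danielewskiPolynomial, twistedDanielewskiPolynomial, y, z, map_add, map_sub,
      map_mul, map_pow, map_one, rename_X] <;> ring

theorem hasCriticalPoint_danielewskiPolynomial (i j l : σ) :
    HasCriticalPoint R (danielewskiPolynomial R i j l) := by
  let origin : MvPolynomial σ R →ₐ[R] R := aeval 0
  have X_mem (m : σ) : X m ∈ RingHom.ker origin := by simp [origin, RingHom.mem_ker]
  refine ⟨origin, ?_⟩
  have mem_sq : (X i * X j ^ 2 + X l ^ 2 : MvPolynomial σ R) ∈ RingHom.ker origin ^ 2 :=
    Ideal.add_mem _ (Ideal.mul_mem_left _ _ (Ideal.pow_mem_pow (X_mem j) 2))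
      (Ideal.pow_mem_pow (X_mem l) 2)
  simpa [danielewskiPolynomial, origin] using mem_sq

theorem not_hasCriticalPoint_twistedDanielewskiPolynomial [NeZero (2 : R)] (hij : i ≠ j)
    (hil : i ≠ l) (hjl : j ≠ l) :
    ¬ HasCriticalPoint R (twistedDanielewskiPolynomial R i j l) := by
  intro h
  obtain ⟨e, he⟩ := h.exists_forall_derivation_eq_zero
  have pderiv_i : e (X j) ^ 2 = 0 := by
    simpa [twistedDanielewskiPolynomial, hij.symm, hil.symm] using he (pderiv i)
  have pderiv_j : e (X i) * (2 * e (X j)) + e (X l) ^ 2 + 1 = 0 := by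
    simpa [twistedDanielewskiPolynomial, hij, hjl.symm, map_ofNat e] using he (pderiv j)
  have pderiv_l : e (X j) * (2 * e (X l)) - 2 * e (X l) = 0 := by
    simpa [twistedDanielewskiPolynomial, hil, hjl, map_ofNat e] using he (pderiv l)
  -- `e (X j)` is nilpotent, so `e (X j) - 1` and `1 + 2 * e (X i) * e (X j)` are units.
  have two_mul_X_l : 2 * e (X l) = 0 := by
    linear_combination 2 * e (X l) * pderiv_i - (e (X j) + 1) * pderiv_l
  refine two_ne_zero (α := R) ?_
  linear_combination 8 * e (X i) ^ 2 * pderiv_i +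
    (1 - 2 * e (X i) * e (X j)) * (2 * pderiv_j - e (X l) * two_mul_X_l)

end Danielewski

theorem danielewski_two_inequivalent_embeddings_general {σ R : Type*} [CommRing R] [IsDomain R]
    [NeZero (2 : R)] {f : Fin 3 → σ} (hf : Function.Injective f) :
    Nonempty
      ((MvPolynomial σ R ⧸
          Ideal.span {rename f (X 0 * X 1 ^ 2 + X 2 ^ 2 + 1 : MvPolynomial (Fin 3) R)}) ≃ₐ[R]
        (MvPolynomial σ R ⧸
          Ideal.span {rename f (X 0 * X 1 ^ 2 + X 2 ^ 2 * X 1 - X 2 ^ 2 + X 1 - 1 :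
            MvPolynomial (Fin 3) R)})) ∧
    ¬ ∃ φ : MvPolynomial σ R ≃ₐ[R] MvPolynomial σ R,
      (Ideal.span
          {rename f (X 0 * X 1 ^ 2 + X 2 ^ 2 + 1 : MvPolynomial (Fin 3) R)}).map φ =
        Ideal.span {rename f (X 0 * X 1 ^ 2 + X 2 ^ 2 * X 1 - X 2 ^ 2 + X 1 - 1 :
          MvPolynomial (Fin 3) R)} := by
  have hp : rename f (X 0 * X 1 ^ 2 + X 2 ^ 2 + 1 : MvPolynomial (Fin 3) R) =
      danielewskiPolynomial R (f 0) (f 1) (f 2) := by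
    simp only [danielewskiPolynomial, map_add, map_mul, map_pow, map_one, rename_X]
  have hq : rename f (X 0 * X 1 ^ 2 + X 2 ^ 2 * X 1 - X 2 ^ 2 + X 1 - 1 :
      MvPolynomial (Fin 3) R) =
      twistedDanielewskiPolynomial R (f 0) (f 1) (f 2) := by
    simp only [twistedDanielewskiPolynomial, map_add, map_sub, map_mul, map_pow, map_one, rename_X]
  rw [hp, hq]
  have h01 : f 0 ≠ f 1 := hf.ne (by decide)
  have h02 : f 0 ≠ f 2 := hf.ne (by decide)
  have h12 : f 1 ≠ f 2 := hf.ne (by decide)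
  refine ⟨nonempty_quotient_danielewski_algEquiv_twistedDanielewski h01.symm h02.symm,
    fun ⟨φ, hφ⟩ ↦ ?_⟩
  exact not_hasCriticalPoint_twistedDanielewskiPolynomial h01 h02 h12
    ((hasCriticalPoint_danielewskiPolynomial (f 0) (f 1) (f 2)).of_map_span_eq_span φ hφ)

/-- **Proposition 1.3.**  For every `k ≥ 3`, the polynomials
`p = x₁x₂² + x₃² + 1` and `q = x₁x₂² + x₃²x₂ − x₃² + x₂ − 1`, viewed in
`ℂ[x₁, …, x_k]`, define isomorphic quotient algebras while no automorphism of
`ℂ[x₁, …, x_k]` maps `p` to `q`; i.e., the hypersurface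
`D(2) × ℂ^{k−3} = {x₁x₂² + x₃² + 1 = 0}` has at least two inequivalent
embeddings in `ℂ^k`. -/
theorem danielewski_two_inequivalent_embeddings (k : ℕ) (hk : 3 ≤ k) :
    Nonempty
      ((MvPolynomial (Fin k) ℂ ⧸
          Ideal.span {rename (Fin.castLE hk)
            (X 0 * X 1 ^ 2 + X 2 ^ 2 + 1 : MvPolynomial (Fin 3) ℂ)}) ≃ₐ[ℂ]
        (MvPolynomial (Fin k) ℂ ⧸
          Ideal.span {rename (Fin.castLE hk)
            (X 0 * X 1 ^ 2 + X 2 ^ 2 * X 1 - X 2 ^ 2 + X 1 - 1 :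
              MvPolynomial (Fin 3) ℂ)})) ∧
    ¬ ∃ φ : MvPolynomial (Fin k) ℂ ≃ₐ[ℂ] MvPolynomial (Fin k) ℂ,
      φ (rename (Fin.castLE hk)
          (X 0 * X 1 ^ 2 + X 2 ^ 2 + 1 : MvPolynomial (Fin 3) ℂ)) =
        rename (Fin.castLE hk)
          (X 0 * X 1 ^ 2 + X 2 ^ 2 * X 1 - X 2 ^ 2 + X 1 - 1 : MvPolynomial (Fin 3) ℂ) := by
  obtain ⟨iso, inequivalent⟩ := danielewski_two_inequivalent_embeddings_general (R := ℂ)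
    (Fin.castLE_injective hk)
  exact ⟨iso, fun ⟨φ, hφ⟩ ↦ inequivalent ⟨φ, by rw [Ideal.map_span, Set.image_singleton, hφ]⟩⟩
end
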